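/- Let a, b, c be coprime positive integers with min{a,b,c} > 1. Then every solution (x,y,z) in positive integers of a^x + b^y = c^z satisfies max{x,y,z} < 6500·(log(max{a,b,c}))^3, where log is the natural logarithm. -/

import Mathlib

/-!
The bound comes from Baker's method for two logarithms. Exactly one of `a`, `b`, `c` is even. Say it
is `a`, and put `p = log b`, `q = log c`, `d = gcd (y, z)`, `y = d v`, `z = d u`. The power `2 ^ x`
divides `c ^ z - b ^ y`, and after changing signs so that `β = ± b` and `γ = ± c` are `1` modulo `4`,
lifting the exponent shows that a large `x` forces a large power of `2` to divide `β ^ v - γ ^ u`,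
up to the harmless loss `log₂ d`.

Both this `2`-adic quantity and the real number `u q - v p` are controlled by one interpolation
determinant in the style of Laurent. Its entries are `choose n k * (β ^ r γ ^ s) ^ l` with
`n = r u + s v`; the rows are indexed by `k < K`, `l < L`, and the `K L` columns are pairs `(r, s)`
in a box.

* Nonvanishing: `zero_estimate` is a zero estimate for polynomials on `𝔾ₐ × 𝔾ₘ`; through
  `exists_minor_ne_zero` it supplies columns with nonzero determinant (`exists_columns`).
* If `4 ^ (K L)` divides `β ^ v - γ ^ u`, then modulo this power `β ^ r γ ^ s` is `η ^ n` for a common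
  root `η`, so all entries are functions of the single variable `n` with rapidly convergent binomial
  expansions, and the determinant is divisible by a power of `2` of order `(K L) ^ 2`
  (`two_adic_det`). This beats the trivial bound on its size (`det_hat_two_adic`).
* If `|u q - v p|` is tiny, then `b ^ r c ^ s` is nearly an exponential of the same variable `n`; the
  entries then have rapidly convergent Chebyshev expansions, and the determinant is a nonzero integer
  of absolute value less than `1` (`det_hat_arch`).

The resulting inequalities `fund_two_adic` and `fund_arch` fail for `K` just above `9 L p q` and
`L ≥ 1.29 log X + 2.6`, where `X` bounds `z / p` and `y / q`. Hence `x ≤ 18.25 L² p q`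
(`two_adic_bound`) and `y p ≤ x log a + 18.2 L² p q` (`arch_bound`), so with
`A = log (max a (max b c))` the numbers `y / q` and `z / p` are at most `18.5 L² (1 + A)`. Taking for
`X` the maximum of these two numbers and `6500 A²`, this is a circular estimate in which `L` is only
of size `log X`; `closing_inequality` resolves it to `X = 6500 A²`, and the theorem follows.
If `c` is the even base, `x log a` and `y log b` are less than `z log c`, and `z` is bounded by the
`2`-adic estimate alone.
-/

/-! ### A zero estimate -/

open Polynomial in
/-- A nonzero polynomial of degree less than `K` in `X` and less than `L` in `Y` does not vanish on
the whole of the sum of `L` points `(x₁, y₁)` with distinct `y₁` and of more than `(K - 1) L` points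
`(x₂, y₂)` with distinct `x₂` and `y₂ ≠ 0`, where first coordinates are added and second coordinates
multiplied. Otherwise the `L × L` determinant of the coefficients of the powers of `Y`, shifted by
the `x₁ i`, would have every `x₂ j` as a root; but its degree is at most `(K - 1) L`, and its leading
coefficient is a Vandermonde determinant up to a nonzero factor. -/
theorem zero_estimate {F ι : Type*} [Field F] [Fintype ι] (K L : ℕ)
    (p : ℕ → ℕ → F) (hp : ∃ k < K, ∃ l < L, p k l ≠ 0)
    (x₁ y₁ : Fin L → F) (hy₁ : Function.Injective y₁)
    (x₂ y₂ : ι → F) (hx₂ : Function.Injective x₂) (hy₂ : ∀ j, y₂ j ≠ 0)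
    (hcard : (K - 1) * L < Fintype.card ι) :
    ∃ i j, ∑ k ∈ Finset.range K, ∑ l ∈ Finset.range L,
      p k l * (x₁ i + x₂ j) ^ k * (y₁ i * y₂ j) ^ l ≠ 0 := by
  classical
  by_contra! hcon
  obtain ⟨k₀, hk₀, l₀, hl₀, hne⟩ := hp
  -- the coefficient polynomials of the powers of `Y`, the zero ones being replaced by `1`
  set P : Fin L → F[X] := fun l => ∑ k ∈ Finset.range K, C (p k l) * X ^ k with hP
  set Q : Fin L → F[X] := fun l => if P l = 0 then 1 else P l with hQ
  have hQ0 : ∀ l, Q l ≠ 0 := by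
    intro l; by_cases h : P l = 0 <;> simp [hQ, h]
  have hQd : ∀ l, (Q l).natDegree ≤ K - 1 := by
    intro l
    by_cases h : P l = 0
    · simp [hQ, h]
    · simp only [hQ, h, if_false]
      refine natDegree_sum_le_of_forall_le _ _ ?_
      intro k hk
      refine (natDegree_C_mul_X_pow_le _ _).trans ?_
      have := Finset.mem_range.1 hk; omega
  set B : Matrix (Fin L) (Fin L) F[X] := Matrix.of fun i l =>
    (taylor (x₁ i) (Q l)) * C (y₁ i ^ (l : ℕ)) with hB
  -- multiplying the columns by powers of `X` makes all entries of the same degree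
  set A : Matrix (Fin L) (Fin L) F[X] := Matrix.of fun i l =>
    X ^ (K - 1 - (Q l).natDegree) * B i l with hA
  have hBd : ∀ i l, (B i l).natDegree ≤ (Q l).natDegree := by
    intro i l
    refine (natDegree_mul_C_le _ _).trans ?_
    exact (natDegree_taylor _ _).le
  have hAd : ∀ i l, (A i l).natDegree ≤ K - 1 := by
    intro i l
    simp only [hA, Matrix.of_apply]
    refine natDegree_mul_le.trans ?_
    rw [natDegree_X_pow]
    have := hQd l; have := hBd i l; omega
  have hAc : ∀ i l, (A i l).coeff (K - 1) = (Q l).leadingCoeff * y₁ i ^ (l : ℕ) := by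
    intro i l
    have h1 : K - 1 = (Q l).natDegree + (K - 1 - (Q l).natDegree) := by have := hQd l; omega
    simp only [hA, hB, Matrix.of_apply]
    conv_lhs => rw [mul_comm (X ^ _)]
    conv_lhs => arg 2; rw [h1]
    rw [coeff_mul_X_pow, coeff_mul_C]
    have := leadingCoeff_taylor (x₁ i) (f := Q l)
    rw [leadingCoeff, natDegree_taylor] at this
    rw [this]
  have hcoeff : (A.det).coeff (L * (K - 1)) =
      Matrix.det (Matrix.of fun i l : Fin L => (Q l).leadingCoeff * y₁ i ^ (l : ℕ)) := by
    rw [Matrix.det_apply', Matrix.det_apply', finsetSum_coeff]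
    refine Finset.sum_congr rfl fun σ _ => ?_
    have h2 := coeff_prod_of_natDegree_le Finset.univ (fun i => A (σ i) i) (K - 1)
      (fun i _ => hAd _ _)
    rw [Finset.card_univ, Fintype.card_fin] at h2
    rw [← C_eq_intCast, coeff_C_mul, h2]
    simp only [hAc, Matrix.of_apply]
  have hdet0 : (A.det).coeff (L * (K - 1)) ≠ 0 := by
    rw [hcoeff]
    have h3 := Matrix.det_mul_row (fun l => (Q l).leadingCoeff) (Matrix.vandermonde y₁)
    simp only [Matrix.vandermonde_apply] at h3
    rw [h3]
    refine mul_ne_zero (Finset.prod_ne_zero_iff.2 fun l _ => leadingCoeff_ne_zero.2 (hQ0 l)) ?_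
    exact Matrix.det_vandermonde_ne_zero_iff.2 hy₁
  have hA0 : A.det ≠ 0 := fun h => hdet0 (by rw [h]; simp)
  have hB0 : B.det ≠ 0 := by
    intro h
    apply hA0
    rw [hA, Matrix.det_mul_row, h, mul_zero]
  have hdeg : B.det.natDegree ≤ L * (K - 1) := by
    rw [Matrix.det_apply']
    refine natDegree_sum_le_of_forall_le _ _ fun σ _ => ?_
    rw [← C_eq_intCast]
    refine (natDegree_C_mul_le _ _).trans ?_
    refine (natDegree_prod_le _ _).trans ?_
    refine (Finset.sum_le_sum fun i _ => (hBd (σ i) i).trans (hQd i)).trans ?_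
    simp
  -- every `x₂ j` is a root of the determinant, a kernel vector being the powers of `y₂ j`
  have hroot : ∀ j, B.det.IsRoot (x₂ j) := by
    intro j
    rw [IsRoot, ← coe_evalRingHom, RingHom.map_det, ← Matrix.exists_mulVec_eq_zero_iff]
    refine ⟨fun l => if P l = 0 then 0 else y₂ j ^ (l : ℕ), ?_, ?_⟩
    · intro h
      have h7 := congrFun h ⟨l₀, hl₀⟩
      have h8 : P ⟨l₀, hl₀⟩ ≠ 0 := by
        intro h0
        have := congrArg (fun q => q.coeff k₀) h0
        simp only [hP, finsetSum_coeff, coeff_C_mul_X_pow, coeff_zero] at this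
        rw [Finset.sum_eq_single k₀ (by intro b _ hb; simp [hb.symm])
          (by intro h; exact absurd (Finset.mem_range.2 hk₀) h)] at this
        simp only [if_true] at this
        exact hne this
      simp only [h8, if_false, Pi.zero_apply] at h7
      exact pow_ne_zero _ (hy₂ j) h7
    · funext i
      have h9 := hcon i j
      rw [Finset.sum_comm, Finset.sum_range] at h9
      simp only [Matrix.mulVec, dotProduct, RingHom.mapMatrix_apply, Matrix.map_apply,
        Pi.zero_apply]
      refine Eq.trans ?_ h9
      refine Finset.sum_congr rfl fun l _ => ?_
      by_cases h0 : P l = 0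
      · simp only [h0, if_true, mul_zero]
        have := congrArg (eval (x₁ i + x₂ j)) h0
        simp only [hP, eval_finsetSum, eval_mul, eval_C, eval_pow, eval_X, eval_zero] at this
        rw [← Finset.sum_mul, this, zero_mul]
      · simp only [h0, if_false, hB, Matrix.of_apply, hQ, coe_evalRingHom, eval_mul, eval_C,
          taylor_eval]
        rw [← Finset.sum_mul]
        simp only [hP, eval_finsetSum, eval_mul, eval_C, eval_pow, eval_X]
        rw [mul_pow, add_comm (x₂ j), mul_assoc]
  have hle := Finset.card_le_card (s := Finset.univ.image x₂) (t := B.det.roots.toFinset) (by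
    intro x hx
    obtain ⟨j, -, rfl⟩ := Finset.mem_image.1 hx
    rw [Multiset.mem_toFinset, mem_roots hB0]
    exact hroot j)
  rw [Finset.card_image_of_injective _ hx₂, Finset.card_univ] at hle
  have h5 := (Multiset.toFinset_card_le B.det.roots).trans (card_roots' B.det)
  have h6 : L * (K - 1) = (K - 1) * L := mul_comm _ _
  omega

/-! ### Nonzero minors and change of polynomial basis -/

/-- Linearly independent rows, finitely many in number but of arbitrary length, have a nonzero maximal
minor. -/
theorem exists_minor_ne_zero {F m T : Type*} [Field F] [Fintype m] [DecidableEq m]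
    (M : m → T → F) (h : ∀ p : m → F, p ≠ 0 → ∃ t, ∑ i, p i * M i t ≠ 0) :
    ∃ c : m → T, Function.Injective c ∧ (Matrix.of fun i j => M i (c j)).det ≠ 0 := by
  set v : T → m → F := fun t i => M i t with hv
  have hspan : Submodule.span F (Set.range v) = ⊤ := by
    by_contra hne
    obtain ⟨f, hf0, hf⟩ := Submodule.exists_le_ker_of_lt_top _ (lt_top_iff_ne_top.2 hne)
    have hfe : ∀ w : m → F, f w = ∑ i, f (Pi.single i 1) * w i := by
      intro w
      rw [LinearMap.pi_apply_eq_sum_univ f w]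
      refine Finset.sum_congr rfl fun i _ => ?_
      rw [smul_eq_mul, mul_comm]
      congr 2
      funext j
      simp [Pi.single_apply, eq_comm]
    obtain ⟨t, ht⟩ := h (fun i => f (Pi.single i 1)) (by
      intro h0
      apply hf0
      ext w
      rw [LinearMap.comp_apply]
      simpa using congrFun h0 w)
    apply ht
    rw [← hfe (v t)]
    exact hf (Submodule.subset_span ⟨t, rfl⟩)
  obtain ⟨κ, a, ha, hsp, hli⟩ := exists_linearIndependent' F v
  let b := Module.Basis.mk hli (by rw [hsp, hspan])
  let e : κ ≃ m := b.indexEquiv (Pi.basisFun F m)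
  refine ⟨a ∘ e.symm, ha.comp e.symm.injective, ?_⟩
  have h1 : LinearIndependent F (Matrix.of fun i j => M i ((a ∘ e.symm) j)).col :=
    hli.comp e.symm e.symm.injective
  exact ((Matrix.isUnit_iff_isUnit_det _).1 (Matrix.linearIndependent_cols_iff_isUnit.1 h1)).ne_zero

open Polynomial Matrix in
/-- Replacing the `k`-th powers of the nodes `n j` by the values of polynomials of degree at most `k`
multiplies the determinant by the coefficients of degree `k`, each occurring once for every `l`. -/
theorem det_poly {F : Type*} [CommRing F] (K L : ℕ) (P : ℕ → F[X])
    (hP : ∀ k, (P k).natDegree ≤ k) (n : Fin K × Fin L → F) (g : Fin L → Fin K × Fin L → F) :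
    (Matrix.of fun i j : Fin K × Fin L => (P i.1).eval (n j) * g i.2 j).det =
      (∏ k : Fin K, (P k).coeff k) ^ L *
        (Matrix.of fun i j : Fin K × Fin L => n j ^ (i.1 : ℕ) * g i.2 j).det := by
  set C : Matrix (Fin K) (Fin K) F := Matrix.of fun k i => (P k).coeff i with hC
  have hdet : C.det = ∏ k : Fin K, (P k).coeff k := by
    rw [Matrix.det_of_isLowerTriangular C]
    · rfl
    · intro i j hij
      simp only [hC, Matrix.of_apply]
      exact coeff_eq_zero_of_natDegree_lt ((hP i).trans_lt hij)
  -- the change of basis acts on rows as the Kronecker product of `C` with the identity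
  have h1 := Matrix.det_kronecker C (1 : Matrix (Fin L) (Fin L) F)
  rw [Matrix.det_one, one_pow, mul_one, Fintype.card_fin, hdet] at h1
  rw [← h1, ← Matrix.det_mul]
  congr 1
  ext ⟨k, l⟩ j
  simp only [Matrix.of_apply, Matrix.mul_apply, Fintype.sum_prod_type, Matrix.kroneckerMap_apply, hC]
  rw [Finset.sum_comm, Finset.sum_eq_single l]
  · simp only [Matrix.one_apply_eq, mul_one]
    rw [eval_eq_sum_range' ((hP k).trans_lt k.2), Finset.sum_range, Finset.sum_mul]
    refine Finset.sum_congr rfl fun i _ => by ring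
  · intro b _ hb
    refine Finset.sum_eq_zero fun i _ => ?_
    rw [Matrix.one_apply_ne hb.symm]; ring
  · simp

/-! ### Determinants with geometrically decaying rows -/

/-- Expansion of a determinant by multilinearity in its rows. -/
theorem det_sum_expand {R ι I : Type*} [CommRing R] [Fintype ι] [DecidableEq ι] [Fintype I]
    [DecidableEq I] (C : ι → I → R) (W : I → ι → R) :
    (Matrix.of fun i j => ∑ t, C i t * W t j).det =
      ∑ f : ι → I, (∏ i, C i (f i)) * (Matrix.of fun i j => W (f i) j).det := by
  have h1 : (Matrix.of fun i j => ∑ t, C i t * W t j) = fun i => ∑ t, C i t • W t := by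
    funext i j
    simp [Finset.sum_apply]
  rw [h1]
  change Matrix.detRowAlternating.toMultilinearMap _ = _
  rw [MultilinearMap.map_sum]
  refine Finset.sum_congr rfl fun f _ => ?_
  rw [MultilinearMap.map_smul_univ, smul_eq_mul]
  rfl

/-- The weight of a term in a two-block expansion: `i` for the `i`-th term of the truncated
expansion and `N` for a remainder row. -/
def wt {N : ℕ} {ι : Type*} : Fin N ⊕ ι → ℕ := Sum.elim (fun i => (i : ℕ)) (fun _ => N)

/-- `N` distinct terms of a two-block expansion have total weight at least
`0 + 1 + ⋯ + (N - 1)`. -/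
theorem wt_sum_ge {N : ℕ} {ι : Type*} [Fintype ι] [DecidableEq ι] (hι : Fintype.card ι = N)
    (f : ι → Fin N ⊕ ι) (hf : Function.Injective f) :
    N * (N - 1) / 2 ≤ ∑ i, wt (f i) := by
  set A : Finset (Fin N ⊕ ι) := Finset.univ.image Sum.inl
  set S : Finset (Fin N ⊕ ι) := Finset.univ.image f
  have hS : ∑ i, wt (f i) = ∑ s ∈ S, wt s := (Finset.sum_image fun _ _ _ _ h => hf h).symm
  have hA : ∑ s ∈ A, wt s = N * (N - 1) / 2 := by
    rw [Finset.sum_image fun _ _ _ _ h => Sum.inl_injective h]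
    rw [← Finset.sum_range_id, Finset.sum_range]
    rfl
  have hcA : A.card = N := by
    rw [Finset.card_image_of_injective _ Sum.inl_injective]; simp
  have hcS : S.card = N := by
    rw [Finset.card_image_of_injective _ hf]; simpa using hι
  have h1 := Finset.sum_inter_add_sum_sdiff A S wt
  have h2 := Finset.sum_inter_add_sum_sdiff S A wt
  rw [Finset.inter_comm] at h2
  have h3 : ∑ s ∈ A \ S, wt s ≤ (A \ S).card * N := by
    rw [← smul_eq_mul]
    refine Finset.sum_le_card_nsmul _ _ _ fun s _ => ?_
    rcases s with i | i
    · exact i.2.le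
    · exact le_rfl
  have h4 : (S \ A).card * N ≤ ∑ s ∈ S \ A, wt s := by
    rw [← smul_eq_mul]
    refine Finset.card_nsmul_le_sum _ _ _ fun s hs => ?_
    rcases s with i | i
    · exact absurd (Finset.mem_image_of_mem _ (Finset.mem_univ i)) (Finset.mem_sdiff.1 hs).2
    · exact le_rfl
  have h5 : (A \ S).card = (S \ A).card := Finset.card_sdiff_comm (by rw [hcA, hcS])
  rw [h5] at h3
  rw [hS, ← hA]
  omega

/-- Rows are given as expansions of length `N` with remainder `G`; the remainder is treated as a
further family of terms, along the standard basis vectors. -/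
theorem det_two_block {R ι : Type*} [CommRing R] [Fintype ι] [DecidableEq ι] (N : ℕ)
    (c : ι → Fin N → R) (b : Fin N → ι → R) (G : ι → ι → R) :
    (Matrix.of fun i j => (∑ t, c i t * b t j) + G i j).det =
      ∑ f : ι → Fin N ⊕ ι, (∏ i, Sum.elim (c i) (G i) (f i)) *
        (Matrix.of fun i j => Sum.elim b (fun s j => if s = j then 1 else 0) (f i) j).det := by
  rw [← det_sum_expand]
  congr 1
  ext i j
  simp [Fintype.sum_sum_type]

/-- Non-Archimedean smallness: if the `t`-th coefficients of all rows are divisible by `q ^ t` and the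
remainders by `q ^ N`, then the determinant is divisible by `q ^ (N (N - 1) / 2)`, since only distinct
terms contribute. -/
theorem det_dvd {ι : Type*} [Fintype ι] [DecidableEq ι] (N : ℕ) (hι : Fintype.card ι = N)
    (q : ℤ) (c : ι → Fin N → ℤ) (b : Fin N → ι → ℤ) (G : ι → ι → ℤ)
    (hc : ∀ i (t : Fin N), q ^ (t : ℕ) ∣ c i t) (hG : ∀ i j, q ^ N ∣ G i j) :
    q ^ (N * (N - 1) / 2) ∣ (Matrix.of fun i j => (∑ t, c i t * b t j) + G i j).det := by
  rw [det_two_block]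
  refine Finset.dvd_sum fun f _ => ?_
  by_cases hf : Function.Injective f
  · refine Dvd.dvd.mul_right ?_ _
    refine (pow_dvd_pow q (wt_sum_ge hι f hf)).trans ?_
    rw [← Finset.prod_pow_eq_pow_sum]
    refine Finset.prod_dvd_prod_of_dvd _ _ fun i _ => ?_
    rcases f i with t | t
    · exact hc i t
    · exact hG i t
  · obtain ⟨i, j, hij, hne⟩ : ∃ i j, f i = f j ∧ i ≠ j := by
      by_contra! h; exact hf fun i j => h i j
    rw [Matrix.det_zero_of_row_eq hne (by funext k; simp [hij])]
    simp

/-- Archimedean smallness: if the `t`-th coefficients of all rows decay like `ρ ^ (-t)` and the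
remainders are of size `ρ ^ (-N)`, then the determinant gains the factor `ρ ^ (-N (N - 1) / 2)`. -/
theorem det_abs_le {ι : Type*} [Fintype ι] [DecidableEq ι] (N : ℕ) (hι : Fintype.card ι = N)
    (ρ : ℝ) (hρ : 1 ≤ ρ) (A : ι → ℝ)
    (c : ι → Fin N → ℝ) (b : Fin N → ι → ℝ) (G : ι → ι → ℝ)
    (hc : ∀ i (t : Fin N), |c i t| ≤ A i * (ρ⁻¹) ^ (t : ℕ)) (hb : ∀ t j, |b t j| ≤ 1)
    (hG : ∀ i j, |G i j| ≤ A i * (ρ⁻¹) ^ N) :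
    |(Matrix.of fun i j => (∑ t, c i t * b t j) + G i j).det| ≤
      (2 * N : ℝ) ^ N * N.factorial * (∏ i, A i) * (ρ⁻¹) ^ (N * (N - 1) / 2) := by
  have hρ0 : 0 < ρ := by linarith
  have hA : ∀ i, 0 ≤ A i := by
    intro i
    have h1 := (abs_nonneg _).trans (hG i i)
    exact nonneg_of_mul_nonneg_left h1 (by positivity)
  rw [det_two_block]
  have hterm : ∀ f : ι → Fin N ⊕ ι, |(∏ i, Sum.elim (c i) (G i) (f i)) *
        (Matrix.of fun i j => Sum.elim b (fun s j => if s = j then 1 else 0) (f i) j).det| ≤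
        N.factorial * (∏ i, A i) * (ρ⁻¹) ^ (N * (N - 1) / 2) := by
    intro f
    by_cases hf : Function.Injective f
    · rw [abs_mul, Finset.abs_prod]
      have h1 : ∏ i, |Sum.elim (c i) (G i) (f i)| ≤ ∏ i, (A i * (ρ⁻¹) ^ wt (f i)) := by
        refine Finset.prod_le_prod (fun i _ => abs_nonneg _) fun i _ => ?_
        rcases f i with t | t
        · exact hc i t
        · exact hG i t
      rw [Finset.prod_mul_distrib, Finset.prod_pow_eq_pow_sum] at h1
      have h2 : (ρ⁻¹) ^ (∑ i, wt (f i)) ≤ (ρ⁻¹) ^ (N * (N - 1) / 2) :=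
        pow_le_pow_of_le_one (by positivity) (inv_le_one_of_one_le₀ hρ) (wt_sum_ge hι f hf)
      have h3 : |(Matrix.of fun i j => Sum.elim b (fun s j => if s = j then (1 : ℝ) else 0)
          (f i) j).det| ≤ N.factorial := by
        have h4 := Matrix.det_le (A := (Matrix.of fun i j => Sum.elim b
          (fun s j => if s = j then (1 : ℝ) else 0) (f i) j)) (abv := AbsoluteValue.abs) (x := 1)
          (by
            intro i j
            simp only [Matrix.of_apply, AbsoluteValue.abs_apply]
            rcases f i with t | t
            · exact hb t j
            · simp only [Sum.elim_inr]; split_ifs <;> simp)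
        simpa [hι] using h4
      have hA' : 0 ≤ ∏ i, A i := Finset.prod_nonneg fun i _ => hA i
      calc _ ≤ ((∏ i, A i) * (ρ⁻¹) ^ (N * (N - 1) / 2)) * N.factorial := by
            refine mul_le_mul (h1.trans ?_) h3 (abs_nonneg _) (by positivity)
            exact mul_le_mul_of_nonneg_left h2 hA'
        _ = _ := by ring
    · obtain ⟨i, j, hij, hne⟩ : ∃ i j, f i = f j ∧ i ≠ j := by
        by_contra! h; exact hf fun i j => h i j
      rw [Matrix.det_zero_of_row_eq hne (by funext k; simp [hij])]
      have hA' : 0 ≤ ∏ i, A i := Finset.prod_nonneg fun i _ => hA i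
      simp only [mul_zero, abs_zero]
      positivity
  refine (Finset.abs_sum_le_sum_abs _ _).trans ((Finset.sum_le_sum fun f _ => hterm f).trans ?_)
  rw [Finset.sum_const, nsmul_eq_mul, Finset.card_univ, Fintype.card_fun, Fintype.card_sum, hι,
    Fintype.card_fin]
  push_cast
  rw [← two_mul]
  apply le_of_eq; ring

/-! ### Existence of a nonzero interpolation determinant -/

theorem pow_mul_pow_fst_eq {β γ : ℤ} (h : IsCoprime β γ) (hβ : 1 < β.natAbs) (hγ : γ ≠ 0)
    {r s r' s' : ℕ} (he : β ^ r * γ ^ s = β ^ r' * γ ^ s') : r = r' := by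
  have h1 := congrArg Int.natAbs he
  simp only [Int.natAbs_mul, Int.natAbs_pow] at h1
  have hco : Nat.Coprime β.natAbs γ.natAbs := Int.isCoprime_iff_gcd_eq_one.1 h
  obtain ⟨p, hp, hpb⟩ := Nat.exists_prime_and_dvd hβ.ne'
  have hpc : ¬ p ∣ γ.natAbs := fun hd => hp.one_lt.ne' (Nat.dvd_one.1 (hco ▸ Nat.dvd_gcd hpb hd))
  have h2 := congrArg (fun n => n.factorization p) h1
  have hb0 : β.natAbs ≠ 0 := by omega
  have hc0 : γ.natAbs ≠ 0 := by simpa using hγ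
  simp only [Nat.factorization_mul (pow_ne_zero _ hb0) (pow_ne_zero _ hc0), Nat.factorization_pow,
    Finsupp.add_apply, Finsupp.smul_apply, Nat.factorization_eq_zero_of_not_dvd hpc, smul_eq_mul,
    mul_zero, add_zero] at h2
  exact Nat.eq_of_mul_eq_mul_right (hp.factorization_pos_of_dvd hb0 hpb) h2

/-- A choice of `K L` columns `(r, s)` in the box `(R₂ + g - 1) × (S₂ + g - 1)` for which the
interpolation determinant is nonzero. The zero estimate is applied to the sum of a `g × g` box, in
which `β ^ r γ ^ s` takes at least `L` distinct values, and of an `R₂ × S₂` box, on which `r u + s v`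
is injective. -/
theorem exists_columns {β γ : ℤ} (h : IsCoprime β γ) (hβ : 1 < β.natAbs) (hγ : 1 < γ.natAbs)
    (u v K L g R₂ S₂ : ℕ) (hg : 0 < g) (hL : L ≤ g ^ 2) (hK : (K - 1) * L < R₂ * S₂)
    (hinj : ∀ r s r' s', r < R₂ → s < S₂ → r' < R₂ → s' < S₂ →
      r * u + s * v = r' * u + s' * v → r = r' ∧ s = s') :
    ∃ c : Fin K × Fin L → ℕ × ℕ, Function.Injective c ∧
      (∀ j, (c j).1 < R₂ + g - 1 ∧ (c j).2 < S₂ + g - 1) ∧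
      (Matrix.of fun i j : Fin K × Fin L => (((c j).1 * u + (c j).2 * v : ℕ) : ℤ) ^ (i.1 : ℕ) *
        (β ^ (c j).1 * γ ^ (c j).2) ^ (i.2 : ℕ)).det ≠ 0 := by
  have hβ0 : β ≠ 0 := by rintro rfl; simp at hβ
  have hγ0 : γ ≠ 0 := by rintro rfl; simp at hγ
  have hinj2 : ∀ r s r' s' : ℕ, β ^ r * γ ^ s = β ^ r' * γ ^ s' → r = r' ∧ s = s' := by
    intro r s r' s' he
    refine ⟨pow_mul_pow_fst_eq h hβ hγ0 he, pow_mul_pow_fst_eq (s := r) (s' := r') h.symm hγ hβ0 ?_⟩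
    rw [mul_comm (γ ^ s), he, mul_comm]
  obtain ⟨c, hc, hdet⟩ := exists_minor_ne_zero (F := ℚ) (m := Fin K × Fin L)
    (T := Fin (R₂ + g - 1) × Fin (S₂ + g - 1))
    (fun i t => (((t.1 : ℕ) * u + (t.2 : ℕ) * v : ℕ) : ℚ) ^ (i.1 : ℕ) *
      ((β : ℚ) ^ (t.1 : ℕ) * (γ : ℚ) ^ (t.2 : ℕ)) ^ (i.2 : ℕ)) (by
    intro p hp
    obtain ⟨⟨k₀, l₀⟩, hne⟩ := Function.ne_iff.1 hp
    have hz := zero_estimate (F := ℚ) (ι := Fin R₂ × Fin S₂) K L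
      (fun k l => if h : k < K ∧ l < L then p (⟨k, h.1⟩, ⟨l, h.2⟩) else 0)
      ⟨k₀, k₀.2, l₀, l₀.2, by simpa using hne⟩
      -- the `i`-th point of the `g × g` box is `(i / g, i % g)`
      (fun i => (((i : ℕ) / g) * u + ((i : ℕ) % g) * v : ℕ))
      (fun i => (β : ℚ) ^ ((i : ℕ) / g) * (γ : ℚ) ^ ((i : ℕ) % g))
      (by
        intro i j hij
        simp only at hij
        have := hinj2 ((i : ℕ) / g) ((i : ℕ) % g) ((j : ℕ) / g) ((j : ℕ) % g)
          (by exact_mod_cast hij)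
        apply Fin.ext
        rw [← Nat.div_add_mod (i : ℕ) g, ← Nat.div_add_mod (j : ℕ) g, this.1, this.2])
      (fun j => ((j.1 : ℕ) * u + (j.2 : ℕ) * v : ℕ))
      (fun j => (β : ℚ) ^ (j.1 : ℕ) * (γ : ℚ) ^ (j.2 : ℕ))
      (by
        intro i j hij
        simp only at hij
        have := hinj i.1 i.2 j.1 j.2 i.1.2 i.2.2 j.1.2 j.2.2 (by exact_mod_cast hij)
        exact Prod.ext (Fin.ext this.1) (Fin.ext this.2))
      (by intro j; have : (β : ℚ) ≠ 0 := by exact_mod_cast hβ0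
          have : (γ : ℚ) ≠ 0 := by exact_mod_cast hγ0
          positivity)
      (by simpa using hK)
    obtain ⟨i, j, hij⟩ := hz
    have hig : (i : ℕ) / g < g := by
      rw [Nat.div_lt_iff_lt_mul hg, ← sq]; exact i.2.trans_le hL
    have him : (i : ℕ) % g < g := Nat.mod_lt _ hg
    refine ⟨(⟨(i : ℕ) / g + j.1, by have := j.1.2; omega⟩,
      ⟨(i : ℕ) % g + j.2, by have := j.2.2; omega⟩), ?_⟩
    convert hij using 1
    rw [Finset.sum_range, Fintype.sum_prod_type]
    refine Finset.sum_congr rfl fun k _ => ?_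
    rw [Finset.sum_range]
    refine Finset.sum_congr rfl fun l _ => ?_
    simp only [k.2, l.2, and_self, dif_pos]
    push_cast
    ring)
  refine ⟨fun j => ((c j).1, (c j).2), ?_, fun j => ⟨(c j).1.2, (c j).2.2⟩, ?_⟩
  · intro i j hij
    apply hc
    have := Prod.ext_iff.1 hij
    exact Prod.ext (Fin.ext this.1) (Fin.ext this.2)
  · intro h0
    apply hdet
    have h1 := congrArg (fun z : ℤ => (z : ℚ)) h0
    simp only [Int.cast_zero] at h1
    rw [← h1, Int.cast_det]
    congr 1
    ext i j
    simp

/-- Passing from powers of `n` to binomial coefficients divides the determinant by factorials. -/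
theorem det_choose (K L : ℕ) (n : Fin K × Fin L → ℕ) (g : Fin L → Fin K × Fin L → ℤ) :
    (Matrix.of fun i j : Fin K × Fin L => (n j : ℤ) ^ (i.1 : ℕ) * g i.2 j).det =
      (∏ k : Fin K, ((k : ℕ).factorial : ℤ)) ^ L *
      (Matrix.of fun i j : Fin K × Fin L => ((n j).choose i.1 : ℤ) * g i.2 j).det := by
  have h1 := det_poly K L (fun k => descPochhammer ℤ k)
    (fun k => (descPochhammer_natDegree (R := ℤ) k).le) (fun j => (n j : ℤ)) g
  have hlead : ∀ k : ℕ, (descPochhammer ℤ k).coeff k = 1 := by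
    intro k
    have := monic_descPochhammer ℤ k
    rwa [Polynomial.Monic, Polynomial.leadingCoeff, descPochhammer_natDegree] at this
  simp only [hlead, Finset.prod_const_one, one_pow, one_mul] at h1
  rw [← h1]
  have h2 := Matrix.det_mul_column (fun i : Fin K × Fin L => ((i.1 : ℕ).factorial : ℤ))
    (Matrix.of fun i j : Fin K × Fin L => ((n j).choose i.1 : ℤ) * g i.2 j)
  rw [Fintype.prod_prod_type] at h2
  simp only [Finset.prod_const, Finset.card_univ, Fintype.card_fin, Finset.prod_pow] at h2
  rw [← h2]
  congr 1
  ext i j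
  simp only [Matrix.of_apply]
  rw [descPochhammer_eval_eq_descFactorial, Nat.descFactorial_eq_factorial_mul_choose]
  push_cast
  ring

/-! ### The 2-adic estimate of the determinant -/

/-- The coefficient of `choose n i` in the binomial expansion of
`4 ^ k * choose n k * (1 + 4 t) ^ n`. -/
def coefTwo (t : ℤ) (k i : ℕ) : ℤ :=
  if k ≤ i then (1 + 4 * t) ^ k * 4 ^ i * t ^ (i - k) * (i.choose k : ℤ) else 0

theorem coefTwo_dvd (t : ℤ) (k i : ℕ) : (4 : ℤ) ^ i ∣ coefTwo t k i := by
  unfold coefTwo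
  split_ifs
  · exact ⟨(1 + 4 * t) ^ k * t ^ (i - k) * (i.choose k : ℤ), by ring⟩
  · exact dvd_zero _

/-- With the factor `4 ^ k`, the function `n ↦ choose n k * (1 + 4 t) ^ n` expands in binomial
coefficients of `n` with coefficients that tend rapidly to zero `2`-adically. -/
theorem choose_mul_pow_eq (t : ℤ) (k n : ℕ) :
    4 ^ k * (n.choose k : ℤ) * (1 + 4 * t) ^ n =
      ∑ i ∈ Finset.range (n + 1), coefTwo t k i * (n.choose i : ℤ) := by
  rcases lt_or_ge n k with h | h
  · rw [Nat.choose_eq_zero_of_lt h]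
    symm
    simp only [Nat.cast_zero, mul_zero, zero_mul]
    refine Finset.sum_eq_zero fun i hi => ?_
    have : ¬ k ≤ i := by have := Finset.mem_range.1 hi; omega
    simp [coefTwo, this]
  · obtain ⟨m, rfl⟩ := Nat.exists_eq_add_of_le h
    rw [add_assoc, Finset.sum_range_add, Finset.sum_eq_zero, zero_add]
    · have h1 : (1 + 4 * t) ^ m = ∑ i ∈ Finset.range (m + 1), (4 * t) ^ i * (m.choose i : ℤ) := by
        rw [add_comm, add_pow]; simp
      rw [pow_add, h1, Finset.mul_sum, Finset.mul_sum]
      refine Finset.sum_congr rfl fun i hi => ?_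
      have h2 := Nat.choose_mul (n := k + m) (k := k + i) (s := k)
        (by omega)
      rw [Nat.add_sub_cancel_left, Nat.add_sub_cancel_left] at h2
      have h3 : (((k + m).choose (k + i) : ℕ) : ℤ) * ((k + i).choose k : ℕ) =
        ((k + m).choose k : ℕ) * (m.choose i : ℕ) := by exact_mod_cast h2
      simp only [coefTwo, le_add_iff_nonneg_right, zero_le, if_true, Nat.add_sub_cancel_left]
      linear_combination (-(1 + 4 * t) ^ k * 4 ^ (k + i) * t ^ i) * h3
    · intro i hi
      have : ¬ k ≤ i := by have := Finset.mem_range.1 hi; omega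
      simp [coefTwo, this]

/-- Truncation modulo `4 ^ N` of the binomial expansion at `N` terms. -/
theorem choose_mul_pow_mod (t : ℤ) (k n N : ℕ) :
    (4 : ℤ) ^ N ∣ 4 ^ k * (n.choose k : ℤ) * (1 + 4 * t) ^ n -
      ∑ i : Fin N, coefTwo t k i * (n.choose i : ℤ) := by
  rw [choose_mul_pow_eq, ← Finset.sum_range (fun i => coefTwo t k i * (n.choose i : ℤ))]
  have h1 : ∑ i ∈ Finset.range (n + 1), coefTwo t k i * (n.choose i : ℤ) =
      ∑ i ∈ Finset.range (N + (n + 1)), coefTwo t k i * (n.choose i : ℤ) := by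
    refine Finset.sum_subset (by intro i; simp; omega) fun i _ hi => ?_
    rw [Nat.choose_eq_zero_of_lt (by simpa using hi)]; simp
  rw [h1, Finset.sum_range_add, add_sub_cancel_left]
  refine Finset.dvd_sum fun i _ => ?_
  exact ((pow_dvd_pow _ (Nat.le_add_right _ _)).trans (coefTwo_dvd t k _)).mul_right _

/-- If `4 ^ N` divides `β ^ v - γ ^ u` with `u` odd, then `β` and `γ` are the `u`-th and `v`-th powers
of a common `η` modulo `4 ^ N`: take `η = β ^ w` with `w` an inverse of `u` modulo `4 ^ N`, as the
integers that are `1` modulo `4` have order dividing `4 ^ N`. -/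
theorem exists_root {β γ : ℤ} (hβ : 4 ∣ β - 1) (hγ : 4 ∣ γ - 1) {u v N : ℕ} (hu : Odd u)
    (h : (4 : ℤ) ^ N ∣ β ^ v - γ ^ u) :
    ∃ η : ℤ, 4 ∣ η - 1 ∧ η ^ u ≡ β [ZMOD 4 ^ N] ∧ η ^ v ≡ γ [ZMOD 4 ^ N] := by
  -- integers that are `1` modulo `4` have order dividing `4 ^ N` modulo `4 ^ N`
  have hper : ∀ δ : ℤ, 4 ∣ δ - 1 → δ ^ (4 ^ N) ≡ 1 [ZMOD 4 ^ N] := by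
    intro δ hδ
    have h1 := dvd_sub_pow_of_dvd_sub (R := ℤ) (p := 4) (a := δ) (b := 1) (by exact_mod_cast hδ) N
    rw [one_pow] at h1
    refine (Int.modEq_iff_dvd.2 ?_).symm
    refine (pow_dvd_pow (4 : ℤ) (Nat.le_succ N)).trans ?_
    exact_mod_cast h1
  have hco : Nat.Coprime u (4 ^ N) := by
    apply Nat.Coprime.pow_right
    have h2 : Nat.Coprime u 2 := Nat.coprime_two_right.2 hu
    exact (h2.mul_right h2 : Nat.Coprime u (2 * 2))
  obtain ⟨w, hw⟩ : ∃ w t : ℕ, u * w = 1 + 4 ^ N * t := by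
    rcases Nat.eq_zero_or_pos N with rfl | hN
    · obtain ⟨k, rfl⟩ := hu
      exact ⟨1, 2 * k, by ring⟩
    · obtain ⟨w, -, hw⟩ := Nat.exists_mul_mod_eq_one_of_coprime hco
        (Nat.one_lt_pow hN.ne' (by norm_num))
      refine ⟨w, (u * w) / 4 ^ N, ?_⟩
      have := Nat.mod_add_div (u * w) (4 ^ N)
      rw [hw] at this
      exact this.symm
  obtain ⟨t, ht⟩ := hw
  have hroot : ∀ δ : ℤ, 4 ∣ δ - 1 → δ ^ (u * w) ≡ δ [ZMOD 4 ^ N] := by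
    intro δ hδ
    rw [ht, pow_add, pow_one, pow_mul]
    calc δ * (δ ^ 4 ^ N) ^ t ≡ δ * 1 ^ t [ZMOD 4 ^ N] := ((hper δ hδ).pow t).mul_left δ
      _ = δ := by ring
  refine ⟨β ^ w, ?_, ?_, ?_⟩
  · exact hβ.trans (sub_one_dvd_pow_sub_one β w)
  · rw [← pow_mul, mul_comm w]
    exact hroot β hβ
  · rw [← pow_mul, mul_comm w, pow_mul]
    calc (β ^ v) ^ w ≡ (γ ^ u) ^ w [ZMOD 4 ^ N] := ((Int.modEq_iff_dvd.2 h).symm).pow w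
      _ = γ ^ (u * w) := by rw [pow_mul]
      _ ≡ γ [ZMOD 4 ^ N] := hroot γ hγ

/-- Modulo `4 ^ (K L)` the number `β ^ r γ ^ s` is `η ^ n` with `n = r u + s v`, so every row of the
determinant has a binomial expansion in the single variable `n`, and `det_dvd` applies. -/
theorem two_adic_det {β γ : ℤ} (hβ : 4 ∣ β - 1) (hγ : 4 ∣ γ - 1) {u v K L : ℕ}
    (huv : Odd u ∨ Odd v) (h : (4 : ℤ) ^ (K * L) ∣ β ^ v - γ ^ u)
    (c : Fin K × Fin L → ℕ × ℕ) :
    (4 : ℤ) ^ (K * L * (K * L - 1) / 2) ∣ 4 ^ (L * (K * (K - 1) / 2)) *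
      (Matrix.of fun i j : Fin K × Fin L => (((c j).1 * u + (c j).2 * v).choose i.1 : ℤ) *
        (β ^ (c j).1 * γ ^ (c j).2) ^ (i.2 : ℕ)).det := by
  set N := K * L with hN
  obtain ⟨η, hη, hηu, hηv⟩ : ∃ η : ℤ, 4 ∣ η - 1 ∧ η ^ u ≡ β [ZMOD 4 ^ N] ∧
      η ^ v ≡ γ [ZMOD 4 ^ N] := by
    rcases huv with hu | hv
    · exact exists_root hβ hγ hu h
    · obtain ⟨η, h1, h2, h3⟩ := exists_root hγ hβ hv (dvd_sub_comm.1 h)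
      exact ⟨η, h1, h3, h2⟩
  have ht : ∀ l : ℕ, ∃ t : ℤ, η ^ l = 1 + 4 * t := by
    intro l
    obtain ⟨t, ht⟩ := hη.trans (sub_one_dvd_pow_sub_one η l)
    exact ⟨t, by linear_combination ht⟩
  choose t ht using ht
  have hY : ∀ r s l : ℕ, (β ^ r * γ ^ s) ^ l ≡ (1 + 4 * t l) ^ (r * u + s * v) [ZMOD 4 ^ N] := by
    intro r s l
    rw [← ht, pow_right_comm]
    refine Int.ModEq.pow l ?_
    rw [pow_add, mul_comm r, mul_comm s, pow_mul η u, pow_mul η v]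
    exact ((hηu.pow r).mul (hηv.pow s)).symm
  have h2 := Matrix.det_mul_column (fun i : Fin K × Fin L => (4 : ℤ) ^ (i.1 : ℕ))
    (Matrix.of fun i j : Fin K × Fin L => (((c j).1 * u + (c j).2 * v).choose i.1 : ℤ) *
        (β ^ (c j).1 * γ ^ (c j).2) ^ (i.2 : ℕ))
  rw [Fintype.prod_prod_type] at h2
  simp only [Finset.prod_const, Finset.card_univ, Fintype.card_fin, Finset.prod_pow,
    Finset.prod_pow_eq_pow_sum] at h2
  rw [← Finset.sum_range (fun i => i), Finset.sum_range_id, ← pow_mul, mul_comm _ L] at h2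
  rw [← h2]
  have h3 := det_dvd (ι := Fin K × Fin L) N (by simp [hN]) 4
    (fun i s => coefTwo (t i.2) i.1 s)
    (fun s j => (((c j).1 * u + (c j).2 * v).choose s : ℤ))
    (fun i j => 4 ^ (i.1 : ℕ) * ((((c j).1 * u + (c j).2 * v).choose i.1 : ℤ) *
        (β ^ (c j).1 * γ ^ (c j).2) ^ (i.2 : ℕ)) - ∑ s : Fin N, coefTwo (t i.2) i.1 s *
        (((c j).1 * u + (c j).2 * v).choose s : ℤ))
    (fun i s => coefTwo_dvd _ _ _)
    (by
      intro i j
      have h4 := choose_mul_pow_mod (t i.2) i.1 ((c j).1 * u + (c j).2 * v) N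
      have h5 := ((hY (c j).1 (c j).2 i.2).symm.dvd).mul_left
        (4 ^ (i.1 : ℕ) * (((c j).1 * u + (c j).2 * v).choose i.1 : ℤ))
      refine (dvd_add h4 h5).trans (dvd_of_eq ?_)
      ring)
  convert h3 using 2
  ext i j
  simp

/-! ### Chebyshev expansions -/

/-- The coefficient of the Chebyshev polynomial `T_i` in `x ^ p`, by the recursion
`2 x T_(i+1) = T_(i+2) + T_i`. -/
noncomputable def chebCoef : ℕ → ℕ → ℝ
  | 0, 0 => 1
  | 0, _ + 1 => 0
  | p + 1, 0 => chebCoef p 1 / 2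
  | p + 1, 1 => chebCoef p 0 + chebCoef p 2 / 2
  | p + 1, i + 2 => (chebCoef p (i + 1) + chebCoef p (i + 3)) / 2

theorem chebCoef_nonneg (p : ℕ) : ∀ i, 0 ≤ chebCoef p i := by
  induction p with
  | zero => rintro (_ | i) <;> simp [chebCoef]
  | succ p ih =>
    rintro (_ | _ | i)
    · rw [chebCoef]; have := ih 1; linarith
    · rw [chebCoef]; have := ih 0; have := ih 2; linarith
    · rw [chebCoef]; have := ih (i + 1); have := ih (i + 3); linarith

theorem chebCoef_eq_zero (p : ℕ) : ∀ i, p < i → chebCoef p i = 0 := by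
  induction p with
  | zero => rintro (_ | i) h <;> simp_all [chebCoef]
  | succ p ih =>
    rintro (_ | _ | i) h
    · omega
    · omega
    · rw [chebCoef, ih _ (by omega), ih _ (by omega)]; simp

/-- The Chebyshev expansion of `x ^ p`, for an arbitrary sequence obeying the Chebyshev recursion; it
is used for `cos (i θ)` at `x = cos θ` and for `cosh (2 i)` at `x = cosh 2`. -/
theorem sum_chebCoef (x : ℝ) (τ : ℕ → ℝ) (h0 : τ 0 = 1) (h1 : τ 1 = x)
    (h2 : ∀ i, τ (i + 2) = 2 * x * τ (i + 1) - τ i) (p : ℕ) :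
    ∀ M, p ≤ M → ∑ i ∈ Finset.range (M + 3), chebCoef p i * τ i = x ^ p := by
  induction p with
  | zero =>
    intro M _
    rw [Finset.sum_range_succ', Finset.sum_eq_zero]
    · simp [chebCoef, h0]
    · intro i _; simp [chebCoef]
  | succ p ih =>
    intro M hM
    have h := ih M (by omega)
    rw [pow_succ, ← h, Finset.sum_range_succ', Finset.sum_range_succ', Finset.sum_range_succ' _ (M + 2)]
    have e1 : (∑ i ∈ Finset.range (M + 2), chebCoef p (i + 1) * τ (i + 1)) * x =
        (∑ i ∈ Finset.range (M + 2), chebCoef p (i + 1) * τ (i + 2)) / 2 +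
        (∑ i ∈ Finset.range (M + 2), chebCoef p (i + 1) * τ i) / 2 := by
      rw [Finset.sum_mul, Finset.sum_div, Finset.sum_div, ← Finset.sum_add_distrib]
      refine Finset.sum_congr rfl fun i _ => ?_
      rw [h2]; ring
    rw [add_mul, e1, Finset.sum_range_succ _ (M + 1), chebCoef_eq_zero p (M + 1 + 1) (by omega),
      Finset.sum_range_succ' (fun i => chebCoef p (i + 1) * τ i) (M + 1),
      Finset.sum_range_succ' (fun i => chebCoef p (i + 1 + 1) * τ (i + 1)) M]
    have e2 : ∑ i ∈ Finset.range (M + 1), chebCoef (p + 1) (i + 1 + 1) * τ (i + 1 + 1) =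
        (∑ i ∈ Finset.range (M + 1), chebCoef p (i + 1) * τ (i + 2)) / 2 +
        (∑ i ∈ Finset.range M, chebCoef p (i + 1 + 1 + 1) * τ (i + 1 + 1)) / 2 := by
      have e3 : ∑ i ∈ Finset.range M, chebCoef p (i + 1 + 1 + 1) * τ (i + 1 + 1) =
        ∑ i ∈ Finset.range (M + 1), chebCoef p (i + 1 + 1 + 1) * τ (i + 1 + 1) := by
        rw [Finset.sum_range_succ _ M, chebCoef_eq_zero p (M + 1 + 1 + 1) (by omega)]; ring
      rw [e3, Finset.sum_div, Finset.sum_div, ← Finset.sum_add_distrib]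
      refine Finset.sum_congr rfl fun i _ => ?_
      rw [chebCoef]; ring
    rw [e2]
    simp only [chebCoef, zero_add, h0, h1]
    ring

/-- The coefficients are nonnegative and `exp (2 i) ≤ 2 cosh (2 i)`, so evaluation of the expansion at
`cosh 2` bounds their weighted sum. -/
theorem chebCoef_weight (p N : ℕ) :
    ∑ i ∈ Finset.range N, chebCoef p i * Real.exp 2 ^ i ≤ 2 * Real.cosh 2 ^ p := by
  have h := sum_chebCoef (Real.cosh 2) (fun i => Real.cosh (i * 2)) (by simp) (by simp)
    (by
      intro i
      have e1 : (((i + 2 : ℕ) : ℝ) * 2) = ((i + 1 : ℕ) : ℝ) * 2 + 2 := by push_cast; ring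
      have e2 : ((i : ℝ) * 2) = ((i + 1 : ℕ) : ℝ) * 2 - 2 := by push_cast; ring
      rw [e1, e2, Real.cosh_add, Real.cosh_sub]; ring) p (N + p) (by omega)
  rw [← h, Finset.mul_sum]
  refine (Finset.sum_le_sum_of_subset_of_nonneg
    (t := Finset.range (N + p + 3)) (by intro i; simp; omega) ?_).trans ?_
  · intro i _ _
    have := chebCoef_nonneg p i
    positivity
  · refine Finset.sum_le_sum fun i _ => ?_
    have e : Real.exp 2 ^ i ≤ 2 * Real.cosh (i * 2) := by
      rw [← Real.exp_nat_mul, Real.cosh_eq]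
      have := Real.exp_pos (-(i * 2 : ℝ))
      linarith
    have := mul_le_mul_of_nonneg_left e (chebCoef_nonneg p i)
    linarith

theorem chebCoef_le (p i : ℕ) : chebCoef p i ≤ 2 * Real.cosh 2 ^ p * (Real.exp 2)⁻¹ ^ i := by
  have h := chebCoef_weight p (i + 1)
  have h1 : chebCoef p i * Real.exp 2 ^ i ≤ 2 * Real.cosh 2 ^ p := by
    refine le_trans ?_ h
    refine Finset.single_le_sum (f := fun i => chebCoef p i * Real.exp 2 ^ i) ?_ (by simp)
    intro i _
    have := chebCoef_nonneg p i
    positivity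
  rw [inv_pow, ← div_eq_mul_inv, le_div_iff₀ (by positivity)]
  exact h1

theorem pow_cheb_approx (p N : ℕ) {ζ : ℝ} (h1 : -1 ≤ ζ) (h2 : ζ ≤ 1) :
    |ζ ^ p - ∑ i ∈ Finset.range N, chebCoef p i * Real.cos (i * Real.arccos ζ)| ≤
      2 * Real.cosh 2 ^ p * (Real.exp 2)⁻¹ ^ N := by
  have hζ := Real.cos_arccos h1 h2
  have h := sum_chebCoef ζ (fun i => Real.cos (i * Real.arccos ζ)) (by simp) (by simp [hζ])
    (by
      intro i
      have e1 : (((i + 2 : ℕ) : ℝ) * Real.arccos ζ) =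
        ((i + 1 : ℕ) : ℝ) * Real.arccos ζ + Real.arccos ζ := by push_cast; ring
      have e2 : ((i : ℝ) * Real.arccos ζ) =
        ((i + 1 : ℕ) : ℝ) * Real.arccos ζ - Real.arccos ζ := by push_cast; ring
      rw [e1, e2, Real.cos_add, Real.cos_sub, hζ]; ring) p p le_rfl
  have hz : ∑ i ∈ Finset.range (N + (p + 3)), chebCoef p i * Real.cos (i * Real.arccos ζ) =
      ζ ^ p := by
    rw [← h]
    symm
    refine Finset.sum_subset (by intro i; simp; omega) fun i _ hi => ?_
    rw [chebCoef_eq_zero p i (by simp at hi; omega)]; ring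
  rw [← hz, Finset.sum_range_add, add_sub_cancel_left]
  have hw := chebCoef_weight p (N + (p + 3))
  rw [Finset.sum_range_add] at hw
  have hw1 : 0 ≤ ∑ i ∈ Finset.range N, chebCoef p i * Real.exp 2 ^ i :=
    Finset.sum_nonneg fun i _ => mul_nonneg (chebCoef_nonneg p i) (by positivity)
  have hw2 : (∑ i ∈ Finset.range (p + 3), chebCoef p (N + i)) * Real.exp 2 ^ N ≤
      ∑ i ∈ Finset.range (p + 3), chebCoef p (N + i) * Real.exp 2 ^ (N + i) := by
    rw [Finset.sum_mul]
    refine Finset.sum_le_sum fun i _ => ?_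
    refine mul_le_mul_of_nonneg_left ?_ (chebCoef_nonneg p _)
    exact pow_le_pow_right₀ (Real.one_le_exp (by norm_num)) (by omega)
  rw [inv_pow, ← div_eq_mul_inv, le_div_iff₀ (by positivity)]
  refine le_trans (mul_le_mul_of_nonneg_right ?_ (by positivity)) (hw2.trans (by linarith))
  refine (Finset.abs_sum_le_sum_abs _ _).trans (Finset.sum_le_sum fun i _ => ?_)
  rw [abs_mul, abs_of_nonneg (chebCoef_nonneg p _)]
  exact mul_le_of_le_one_right (chebCoef_nonneg p _) (Real.abs_cos_le_one _)

/-- On `[-1, 1]` the function `ζ ^ k * exp (κ ζ)` has a Chebyshev expansion whose coefficients decay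
like `exp (-2 i)`, with a remainder of the same order. It is obtained by summing the expansions of
the powers over the exponential series. -/
theorem exp_cheb_approx (k N : ℕ) (κ : ℝ) :
    ∃ c : ℕ → ℝ, (∀ i, |c i| ≤ 2 * Real.cosh 2 ^ k * Real.exp (Real.cosh 2 * |κ|) *
        (Real.exp 2)⁻¹ ^ i) ∧
      ∀ ζ, -1 ≤ ζ → ζ ≤ 1 → |ζ ^ k * Real.exp (κ * ζ) -
        ∑ i ∈ Finset.range N, c i * Real.cos (i * Real.arccos ζ)| ≤
        2 * Real.cosh 2 ^ k * Real.exp (Real.cosh 2 * |κ|) * (Real.exp 2)⁻¹ ^ N := by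
  have hσ : 0 < Real.cosh 2 := Real.cosh_pos 2
  have hexp : ∀ x : ℝ, HasSum (fun n : ℕ => x ^ n / n.factorial) (Real.exp x) := by
    intro x
    rw [Real.exp_eq_exp_ℝ]
    exact NormedSpace.expSeries_div_hasSum_exp x
  -- the majorant of all the series below
  have hmaj : ∀ B : ℝ, HasSum (fun n : ℕ => |κ| ^ n / n.factorial * (2 * Real.cosh 2 ^ (k + n) * B))
      (2 * Real.cosh 2 ^ k * Real.exp (Real.cosh 2 * |κ|) * B) := by
    intro B
    have := ((hexp (Real.cosh 2 * |κ|)).mul_left (2 * Real.cosh 2 ^ k)).mul_right B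
    refine Eq.mp (congrArg (fun f => HasSum f _) (funext fun n => ?_)) this
    rw [mul_pow, pow_add]; ring
  have hbd : ∀ (n : ℕ) (x B : ℝ), |x| ≤ 2 * Real.cosh 2 ^ (k + n) * B →
      ‖κ ^ n / n.factorial * x‖ ≤ |κ| ^ n / n.factorial * (2 * Real.cosh 2 ^ (k + n) * B) := by
    intro n x B hx
    rw [Real.norm_eq_abs, abs_mul, abs_div, abs_pow, Nat.abs_cast]
    exact mul_le_mul_of_nonneg_left hx (by positivity)
  have hcs : ∀ i n, ‖κ ^ n / n.factorial * chebCoef (k + n) i‖ ≤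
      |κ| ^ n / n.factorial * (2 * Real.cosh 2 ^ (k + n) * (Real.exp 2)⁻¹ ^ i) := by
    intro i n
    apply hbd
    rw [abs_of_nonneg (chebCoef_nonneg _ _)]
    exact chebCoef_le _ _
  have hcsum : ∀ i, Summable fun n : ℕ => κ ^ n / n.factorial * chebCoef (k + n) i :=
    fun i => Summable.of_norm_bounded (hmaj _).summable (hcs i)
  refine ⟨fun i => ∑' n : ℕ, κ ^ n / n.factorial * chebCoef (k + n) i, fun i => ?_, fun ζ h1 h2 => ?_⟩
  · exact tsum_of_norm_bounded (hmaj _) (hcs i)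
  · have hs : HasSum (fun n : ℕ => κ ^ n / n.factorial * (ζ ^ (k + n) -
        ∑ i ∈ Finset.range N, chebCoef (k + n) i * Real.cos (i * Real.arccos ζ)))
        (ζ ^ k * Real.exp (κ * ζ) - ∑ i ∈ Finset.range N,
          (∑' n : ℕ, κ ^ n / n.factorial * chebCoef (k + n) i) * Real.cos (i * Real.arccos ζ)) := by
      have hA := (hexp (κ * ζ)).mul_left (ζ ^ k)
      have hB := hasSum_sum (s := Finset.range N)
        (fun i (_ : i ∈ Finset.range N) => (hcsum i).hasSum.mul_right (Real.cos (i * Real.arccos ζ)))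
      refine Eq.mp (congrArg (fun f => HasSum f _) (funext fun n => ?_)) (hA.sub hB)
      rw [mul_sub, Finset.mul_sum, mul_pow, pow_add]
      congr 1
      · ring
      · refine Finset.sum_congr rfl fun i _ => by ring
    rw [← hs.tsum_eq, ← Real.norm_eq_abs]
    refine tsum_of_norm_bounded (hmaj ((Real.exp 2)⁻¹ ^ N)) fun n => ?_
    exact hbd n _ _ (pow_cheb_approx _ _ h1 h2)

/-! ### Factorials, heights and normalization of the determinant -/

theorem le_log_factorial (n : ℕ) (hn : 1 ≤ n) :
    n * Real.log n - n + 1 ≤ Real.log n.factorial := by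
  induction n, hn using Nat.le_induction with
  | base => simp
  | succ n hn ih =>
    have hn0 : (0 : ℝ) < n := by exact_mod_cast hn
    rw [Nat.factorial_succ]
    push_cast
    rw [Real.log_mul (by positivity) (by positivity)]
    have h := Real.log_le_sub_one_of_pos (x := (n + 1) / n) (by positivity)
    rw [Real.log_div (by positivity) (by positivity)] at h
    have h2 : (n : ℝ) * ((n + 1) / n - 1) = 1 := by field_simp; ring
    nlinarith

theorem le_sum_log_factorial (K : ℕ) (hK : 1 ≤ K) :
    (K * (K - 1) / 2 : ℝ) * (Real.log K - 3 / 2) ≤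
      ∑ k ∈ Finset.range K, Real.log k.factorial := by
  induction K, hK using Nat.le_induction with
  | base => simp
  | succ K hK ih =>
    have hK0 : (0 : ℝ) < K := by exact_mod_cast hK
    rw [Finset.sum_range_succ]
    have h1 := le_log_factorial K hK
    have h := Real.log_le_sub_one_of_pos (x := ((K : ℝ) + 1) / K) (by positivity)
    rw [Real.log_div (by positivity) (by positivity)] at h
    have h2 : (K : ℝ) * (K + 1) * ((K + 1) / K - 1) = K + 1 := by field_simp; ring
    have h3 : (K : ℝ) * (K + 1) * (Real.log (K + 1) - Real.log K) ≤ K + 1 := by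
      have h4 : (0 : ℝ) ≤ K * (K + 1) := by positivity
      have := mul_le_mul_of_nonneg_left h h4
      linarith
    push_cast
    nlinarith

theorem sum_centered (L : ℕ) : ∑ l : Fin L, ((l : ℝ) - ((L : ℝ) - 1) / 2) = 0 := by
  rw [← Finset.sum_range (fun l => (l : ℝ) - ((L : ℝ) - 1) / 2), Finset.sum_sub_distrib]
  simp only [Finset.sum_const, Finset.card_range, nsmul_eq_mul]
  have : ∑ i ∈ Finset.range L, (i : ℝ) = L * (L - 1) / 2 := by
    induction L with
    | zero => simp
    | succ n ih => rw [Finset.sum_range_succ, ih]; push_cast; ring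
  rw [this]; ring

theorem sum_abs_centered_le (L : ℕ) :
    ∑ l : Fin L, |(l : ℝ) - ((L : ℝ) - 1) / 2| ≤ (L : ℝ) ^ 2 / 4 := by
  rw [← Finset.sum_range (fun l => |(l : ℝ) - ((L : ℝ) - 1) / 2|)]
  induction L using Nat.twoStepInduction with
  | zero => simp
  | one => simp
  | more L ih _ =>
    rw [Finset.sum_range_succ, Finset.sum_range_succ']
    have h1 : ∀ k : ℕ, ((k + 1 : ℕ) : ℝ) - (((L + 2 : ℕ) : ℝ) - 1) / 2 =
        (k : ℝ) - ((L : ℝ) - 1) / 2 := by intro k; push_cast; ring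
    simp only [h1]
    have h2 : |((0 : ℕ) : ℝ) - (((L + 2 : ℕ) : ℝ) - 1) / 2| = (L + 1) / 2 := by
      rw [abs_sub_comm, abs_of_nonneg] <;> push_cast
      · ring
      · linarith [(Nat.cast_nonneg L : (0 : ℝ) ≤ L)]
    have h3 : |(L : ℝ) - ((L : ℝ) - 1) / 2| = (L + 1) / 2 := by
      rw [abs_of_nonneg]
      · ring
      · linarith [(Nat.cast_nonneg L : (0 : ℝ) ≤ L)]
    rw [h2, h3]
    push_cast
    linarith

/-- The sum of the nonnegative heights `r p + s q` over distinct columns is at most the sum over the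
whole box. -/
theorem sum_heights_le (K L R S : ℕ) (p q : ℝ) (hp : 0 ≤ p) (hq : 0 ≤ q)
    (c : Fin K × Fin L → ℕ × ℕ) (hc : Function.Injective c)
    (hcb : ∀ j, (c j).1 < R ∧ (c j).2 < S) :
    ∑ j, ((c j).1 * p + (c j).2 * q) ≤ R * S * (((R : ℝ) - 1) * p + ((S : ℝ) - 1) * q) / 2 := by
  have hg : ∀ n : ℕ, ∑ i ∈ Finset.range n, (i : ℝ) = n * (n - 1) / 2 := by
    intro n
    induction n with
    | zero => simp
    | succ n ih => rw [Finset.sum_range_succ, ih]; push_cast; ring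
  have h1 : ∑ j, ((c j).1 * p + (c j).2 * q) =
      ∑ t ∈ Finset.univ.image c, ((t.1 : ℝ) * p + t.2 * q) :=
    (Finset.sum_image (f := fun t : ℕ × ℕ => ((t.1 : ℝ) * p + t.2 * q)) fun _ _ _ _ h => hc h).symm
  rw [h1]
  refine (Finset.sum_le_sum_of_subset_of_nonneg
    (t := Finset.range R ×ˢ Finset.range S) ?_ ?_).trans ?_
  · intro t ht
    obtain ⟨j, -, rfl⟩ := Finset.mem_image.1 ht
    simpa using hcb j
  · intro t _ _
    positivity
  · rw [Finset.sum_product]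
    simp only [Finset.sum_add_distrib, Finset.sum_const, Finset.card_range, nsmul_eq_mul,
      ← Finset.mul_sum, ← Finset.sum_mul, hg]
    apply le_of_eq; ring

open Polynomial in
/-- Comparison of the integral determinant with the one in normalized variables, where `n` is replaced
by `ζ = (n - m₀) / m₀`, the exponents `l` are centered at `(L - 1) / 2` and the logarithm
`r p + s q` is centered at `ym`. -/
theorem det_relation (K L R S u v : ℕ) (β γ : ℤ) (p q m₀ ym : ℝ) (hp : 0 ≤ p) (hq : 0 ≤ q)
    (hL : 1 ≤ L) (hm : 0 < m₀) (c : Fin K × Fin L → ℕ × ℕ) (hc : Function.Injective c)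
    (hcb : ∀ j, (c j).1 < R ∧ (c j).2 < S) :
    |((Matrix.of fun i j : Fin K × Fin L => (((c j).1 * u + (c j).2 * v).choose i.1 : ℤ) *
        (β ^ (c j).1 * γ ^ (c j).2) ^ (i.2 : ℕ)).det : ℝ)| *
      (∏ k : Fin K, ((k : ℕ).factorial : ℝ)) ^ L ≤
    m₀ ^ (L * (K * (K - 1) / 2)) *
      Real.exp (((L : ℝ) - 1) / 2 *
        (R * S * (((R : ℝ) - 1) * p + ((S : ℝ) - 1) * q) / 2)) *
      |(Matrix.of fun i j : Fin K × Fin L =>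
        ((((c j).1 * u + (c j).2 * v : ℕ) - m₀) / m₀) ^ (i.1 : ℕ) *
        (((β : ℝ) ^ (c j).1 * (γ : ℝ) ^ (c j).2) ^ (i.2 : ℕ) *
          Real.exp (-(((L : ℝ) - 1) / 2) * ((c j).1 * p + (c j).2 * q) -
            (((i.2 : ℕ) : ℝ) - ((L : ℝ) - 1) / 2) * ym))).det| := by
  set n : Fin K × Fin L → ℕ := fun j => (c j).1 * u + (c j).2 * v with hn
  set y : Fin K × Fin L → ℝ := fun j => (c j).1 * p + (c j).2 * q with hy
  set c₀ : ℝ := ((L : ℝ) - 1) / 2 with hc₀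
  -- from binomial coefficients to powers of `n`, and then to powers of the normalized variable
  have h1 := det_choose K L n (fun l j => (β ^ (c j).1 * γ ^ (c j).2) ^ (l : ℕ))
  have h1' := congrArg (fun z : ℤ => (z : ℝ)) h1
  simp only [Int.cast_mul, Int.cast_pow, Int.cast_prod, Int.cast_natCast] at h1'
  rw [Int.cast_det] at h1'
  have h2 := det_poly (F := ℝ) K L (fun k => (C m₀⁻¹ * (X - C m₀)) ^ k)
    (fun k => by
      refine natDegree_pow_le.trans ?_
      have : (C m₀⁻¹ * (X - C m₀)).natDegree ≤ 1 :=
        (natDegree_C_mul_le _ _).trans (natDegree_X_sub_C _).le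
      exact (Nat.mul_le_mul_left k this).trans (by simp))
    (fun j => (n j : ℝ)) (fun l j => ((β : ℝ) ^ (c j).1 * (γ : ℝ) ^ (c j).2) ^ (l : ℕ))
  have hlead : ∀ k : ℕ, ((C m₀⁻¹ * (X - C m₀)) ^ k).coeff k = m₀⁻¹ ^ k := by
    intro k
    rw [mul_pow, ← C_pow, coeff_C_mul]
    have h3 : ((X - C m₀) ^ k).coeff k = 1 := by
      have := ((monic_X_sub_C m₀).pow k)
      rwa [Monic, leadingCoeff, natDegree_pow, natDegree_X_sub_C, mul_one] at this
    rw [h3, mul_one]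
  simp only [hlead, eval_pow, eval_mul, eval_C, eval_sub, eval_X] at h2
  rw [Finset.prod_pow_eq_pow_sum, ← Finset.sum_range (fun i => i), Finset.sum_range_id, ← pow_mul,
    mul_comm _ L] at h2
  -- row and column scalings
  have h4 := Matrix.det_mul_column
    (fun i : Fin K × Fin L => Real.exp (-((((i.2 : ℕ) : ℝ) - c₀) * ym)))
    (Matrix.of fun i j : Fin K × Fin L => Real.exp (-c₀ * y j) *
      ((m₀⁻¹ * ((n j : ℝ) - m₀)) ^ (i.1 : ℕ) *
        ((β : ℝ) ^ (c j).1 * (γ : ℝ) ^ (c j).2) ^ (i.2 : ℕ)))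
  have h5 := Matrix.det_mul_row
    (fun j : Fin K × Fin L => Real.exp (-c₀ * y j))
    (Matrix.of fun i j : Fin K × Fin L => ((m₀⁻¹ * ((n j : ℝ) - m₀)) ^ (i.1 : ℕ) *
        ((β : ℝ) ^ (c j).1 * (γ : ℝ) ^ (c j).2) ^ (i.2 : ℕ)))
  have h6 : ∏ i : Fin K × Fin L, Real.exp (-((((i.2 : ℕ) : ℝ) - c₀) * ym)) = 1 := by
    rw [← Real.exp_sum, Fintype.sum_prod_type]
    have : ∑ l : Fin L, -((((l : ℕ) : ℝ) - c₀) * ym) = 0 := by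
      rw [Finset.sum_neg_distrib, ← Finset.sum_mul, sum_centered]; simp
    simp [this]
  simp only [Matrix.of_apply] at h4 h5
  rw [h6, one_mul, h5, ← Real.exp_sum, ← Finset.mul_sum] at h4
  have h7 : (Matrix.of fun i j : Fin K × Fin L =>
        (((n j : ℕ) - m₀) / m₀) ^ (i.1 : ℕ) *
        (((β : ℝ) ^ (c j).1 * (γ : ℝ) ^ (c j).2) ^ (i.2 : ℕ) *
          Real.exp (-c₀ * y j - (((i.2 : ℕ) : ℝ) - c₀) * ym))) =
      (Matrix.of fun i j : Fin K × Fin L => Real.exp (-((((i.2 : ℕ) : ℝ) - c₀) * ym)) *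
        (Real.exp (-c₀ * y j) * ((m₀⁻¹ * ((n j : ℝ) - m₀)) ^ (i.1 : ℕ) *
        ((β : ℝ) ^ (c j).1 * (γ : ℝ) ^ (c j).2) ^ (i.2 : ℕ)))) := by
    ext i j
    simp only [Matrix.of_apply]
    rw [sub_eq_add_neg (-c₀ * y j), Real.exp_add, div_eq_inv_mul]
    ring
  rw [h7, h4, h2]
  set E : ℝ := (Matrix.of fun i j : Fin K × Fin L => (n j : ℝ) ^ (i.1 : ℕ) *
    ((β : ℝ) ^ (c j).1 * (γ : ℝ) ^ (c j).2) ^ (i.2 : ℕ)).det with hE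
  have h8 : E = (∏ k : Fin K, ((k : ℕ).factorial : ℝ)) ^ L *
      ((Matrix.of fun i j : Fin K × Fin L => (((c j).1 * u + (c j).2 * v).choose i.1 : ℤ) *
        (β ^ (c j).1 * γ ^ (c j).2) ^ (i.2 : ℕ)).det : ℝ) := by
    rw [← h1', hE]
    congr 1
    ext i j
    simp
  have hfac : 0 ≤ (∏ k : Fin K, ((k : ℕ).factorial : ℝ)) ^ L := by positivity
  have h9 := congrArg abs h8
  rw [abs_mul, abs_of_nonneg hfac, mul_comm] at h9
  rw [← h9, abs_mul, abs_mul, Real.abs_exp, abs_pow, abs_of_pos (inv_pos.2 hm), inv_pow]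
  have h10 := sum_heights_le K L R S p q hp hq c hc hcb
  have hc₀0 : 0 ≤ c₀ := by
    have : (1 : ℝ) ≤ L := by exact_mod_cast hL
    rw [hc₀]; linarith
  have h11 : 1 ≤ Real.exp (c₀ * (R * S * (((R : ℝ) - 1) * p + ((S : ℝ) - 1) * q) / 2)) *
      Real.exp (-c₀ * ∑ j, y j) := by
    rw [← Real.exp_add]
    apply Real.one_le_exp
    have := mul_le_mul_of_nonneg_left h10 hc₀0
    simp only [hy]
    linarith
  have hmp : 0 < m₀ ^ (L * (K * (K - 1) / 2)) := by positivity
  calc |E| = |E| * 1 := by ring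
    _ ≤ |E| * _ := mul_le_mul_of_nonneg_left h11 (abs_nonneg _)
    _ = _ := by field_simp

/-! ### Archimedean estimates of the normalized determinant -/

theorem prod_exp_centered_le (K L : ℕ) (B : ℝ) (hB : 0 ≤ B) :
    ∏ i : Fin K × Fin L, Real.exp (B * |((i.2 : ℕ) : ℝ) - ((L : ℝ) - 1) / 2|) ≤
      Real.exp (B * (K * ((L : ℝ) ^ 2 / 4))) := by
  rw [← Real.exp_sum, Fintype.sum_prod_type]
  apply Real.exp_le_exp.2
  simp only [Finset.sum_const, Finset.card_univ, Fintype.card_fin, nsmul_eq_mul, ← Finset.mul_sum]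
  have := mul_le_mul_of_nonneg_left (sum_abs_centered_le L) (by positivity : 0 ≤ B * K)
  linarith

theorem abs_normalized_le {n m₀ : ℝ} (hm : 0 < m₀) (h0 : 0 ≤ n) (h1 : n ≤ 2 * m₀) :
    |(n - m₀) / m₀| ≤ 1 := by
  rw [abs_div, abs_of_pos hm, div_le_one hm, abs_le]
  constructor <;> linarith

/-- Normalization of the entry `(a ^ r b ^ s) ^ l`: the exponent is centered at `C` and the logarithm
`r p + s q` at `B`. -/
theorem normalized_pow (p q a b B C : ℝ) (r s l : ℕ) (ha : a = Real.exp p) (hb : b = Real.exp q) :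
    (a ^ r * b ^ s) ^ l * Real.exp (-C * (r * p + s * q) - (l - C) * B) =
      Real.exp ((l - C) * ((r * p + s * q) - B)) := by
  rw [ha, hb, ← Real.exp_nat_mul, ← Real.exp_nat_mul, ← Real.exp_add, ← Real.exp_nat_mul,
    ← Real.exp_add]
  congr 1; ring

/-- The trivial bound for the normalized determinant, from the Leibniz formula and `|ζ| ≤ 1`; it
suffices on the `2`-adic side. -/
theorem det_hat_two_adic (K L R S u v : ℕ) (β γ p q m₀ : ℝ) (hp : 0 ≤ p) (hq : 0 ≤ q)
    (hβ : |β| = Real.exp p) (hγ : |γ| = Real.exp q) (hm : 0 < m₀) (hR : 1 ≤ R) (hS : 1 ≤ S)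
    (hmax : ((R : ℝ) - 1) * u + ((S : ℝ) - 1) * v = 2 * m₀)
    (c : Fin K × Fin L → ℕ × ℕ) (hcb : ∀ j, (c j).1 < R ∧ (c j).2 < S) :
    |(Matrix.of fun i j : Fin K × Fin L =>
        ((((c j).1 * u + (c j).2 * v : ℕ) - m₀) / m₀) ^ (i.1 : ℕ) *
        ((β ^ (c j).1 * γ ^ (c j).2) ^ (i.2 : ℕ) *
          Real.exp (-(((L : ℝ) - 1) / 2) * ((c j).1 * p + (c j).2 * q) -
            (((i.2 : ℕ) : ℝ) - ((L : ℝ) - 1) / 2) *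
              ((((R : ℝ) - 1) * p + ((S : ℝ) - 1) * q) / 2)))).det| ≤
      (K * L).factorial * Real.exp ((((R : ℝ) - 1) * p + ((S : ℝ) - 1) * q) / 2 *
        (K * ((L : ℝ) ^ 2 / 4))) := by
  set H : ℝ := ((R : ℝ) - 1) * p + ((S : ℝ) - 1) * q with hH
  set W : Fin K × Fin L → ℝ :=
    fun i => Real.exp (H / 2 * |((i.2 : ℕ) : ℝ) - ((L : ℝ) - 1) / 2|) with hW
  set M : Matrix (Fin K × Fin L) (Fin K × Fin L) ℝ := Matrix.of fun i j : Fin K × Fin L =>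
        ((((c j).1 * u + (c j).2 * v : ℕ) - m₀) / m₀) ^ (i.1 : ℕ) *
        ((β ^ (c j).1 * γ ^ (c j).2) ^ (i.2 : ℕ) *
          Real.exp (-(((L : ℝ) - 1) / 2) * ((c j).1 * p + (c j).2 * q) -
            (((i.2 : ℕ) : ℝ) - ((L : ℝ) - 1) / 2) * (H / 2))) with hM
  have hrs : ∀ j, ((c j).1 : ℝ) ≤ R - 1 ∧ ((c j).2 : ℝ) ≤ S - 1 := by
    intro j
    have h1 : ((c j).1 : ℝ) + 1 ≤ R := by exact_mod_cast (hcb j).1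
    have h2 : ((c j).2 : ℝ) + 1 ≤ S := by exact_mod_cast (hcb j).2
    constructor <;> linarith
  have hent : ∀ i j, |M i j| ≤ W i := by
    intro i j
    obtain ⟨h1, h2⟩ := hrs j
    have hζ : |((((c j).1 * u + (c j).2 * v : ℕ) : ℝ) - m₀) / m₀| ≤ 1 := by
      apply abs_normalized_le hm (by positivity)
      rw [← hmax]; push_cast
      gcongr
    simp only [hM, Matrix.of_apply]
    rw [abs_mul, abs_mul, abs_pow, abs_pow, abs_mul, abs_pow, abs_pow, Real.abs_exp,
      normalized_pow p q _ _ _ _ _ _ _ hβ hγ]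
    refine (mul_le_of_le_one_left (Real.exp_pos _).le (pow_le_one₀ (abs_nonneg _) hζ)).trans ?_
    apply Real.exp_le_exp.2
    refine (le_abs_self _).trans ?_
    rw [abs_mul, mul_comm]
    refine mul_le_mul_of_nonneg_right ?_ (abs_nonneg _)
    have h3 := mul_le_mul_of_nonneg_right h1 hp
    have h4 := mul_le_mul_of_nonneg_right h2 hq
    have h5 : 0 ≤ ((c j).1 : ℝ) * p := by positivity
    have h6 : 0 ≤ ((c j).2 : ℝ) * q := by positivity
    rw [abs_le]
    constructor <;> simp only [hH] <;> linarith
  have hWpos : ∀ i, 0 < W i := fun i => Real.exp_pos _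
  have hMW : M = Matrix.of fun i j => W i * (M i j / W i) := by
    ext i j
    have := (hWpos i).ne'
    simp only [Matrix.of_apply]; field_simp
  have h7 := Matrix.det_mul_column W (Matrix.of fun i j => M i j / W i)
  simp only [Matrix.of_apply] at h7
  rw [hMW, h7, abs_mul, Finset.abs_prod]
  simp only [abs_of_pos (hWpos _)]
  have hprod := prod_exp_centered_le K L (H / 2) (by
    have hR' : (1 : ℝ) ≤ R := by exact_mod_cast hR
    have hS' : (1 : ℝ) ≤ S := by exact_mod_cast hS
    have h3 := mul_nonneg (by linarith : (0 : ℝ) ≤ R - 1) hp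
    have h4 := mul_nonneg (by linarith : (0 : ℝ) ≤ S - 1) hq
    simp only [hH]; linarith)
  have h8 := Matrix.det_le (A := (Matrix.of fun i j => M i j / W i)) (abv := AbsoluteValue.abs)
    (x := (1 : ℝ)) (by
      intro i j
      simp only [Matrix.of_apply, AbsoluteValue.abs_apply]
      rw [abs_div, abs_of_pos (hWpos i), div_le_one (hWpos i)]
      exact hent i j)
  simp only [Fintype.card_prod, Fintype.card_fin, one_pow, nsmul_eq_mul, mul_one,
    AbsoluteValue.abs_apply] at h8
  rw [mul_comm]
  exact mul_le_mul h8 hprod (Finset.prod_nonneg fun i _ => (hWpos i).le) (by positivity)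

/-- When `u q - v p` is tiny, the centered logarithm `r p + s q - H / 2`, where
`H = (R - 1) p + (S - 1) q`, is nearly `(H / 2) ζ`. Hence the entries are nearly `ζ ^ k * exp (κ ζ)`
with `κ` depending only on `l`, and their Chebyshev expansions make the determinant small. -/
theorem det_hat_arch (K L R S u v : ℕ) (β γ p q m₀ : ℝ) (hp : 0 ≤ p) (hq : 0 ≤ q)
    (hβ : β = Real.exp p) (hγ : γ = Real.exp q) (hm : 0 < m₀) (hR : 2 ≤ R) (hS : 1 ≤ S)
    (hu : 1 ≤ u) (hSK : S ≤ K + 1) (hL : 1 ≤ L)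
    (hmax : ((R : ℝ) - 1) * u + ((S : ℝ) - 1) * v = 2 * m₀)
    (hΛ : |u * q - v * p| ≤ Real.exp (-(2 * (K * L : ℕ))) / (K * L : ℕ))
    (c : Fin K × Fin L → ℕ × ℕ) (hcb : ∀ j, (c j).1 < R ∧ (c j).2 < S) :
    |(Matrix.of fun i j : Fin K × Fin L =>
        ((((c j).1 * u + (c j).2 * v : ℕ) - m₀) / m₀) ^ (i.1 : ℕ) *
        ((β ^ (c j).1 * γ ^ (c j).2) ^ (i.2 : ℕ) *
          Real.exp (-(((L : ℝ) - 1) / 2) * ((c j).1 * p + (c j).2 * q) -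
            (((i.2 : ℕ) : ℝ) - ((L : ℝ) - 1) / 2) *
              ((((R : ℝ) - 1) * p + ((S : ℝ) - 1) * q) / 2)))).det| ≤
      (2 * (K * L : ℕ)) ^ (K * L) * (K * L).factorial *
      (3 ^ (K * L) * Real.cosh 2 ^ (L * (K * (K - 1) / 2)) *
        Real.exp (Real.cosh 2 * ((((R : ℝ) - 1) * p + ((S : ℝ) - 1) * q) / 2) *
        (K * ((L : ℝ) ^ 2 / 4)))) * (Real.exp 2)⁻¹ ^ (K * L * (K * L - 1) / 2) := by
  set H : ℝ := ((R : ℝ) - 1) * p + ((S : ℝ) - 1) * q with hH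
  set N : ℕ := K * L with hN
  have hR' : (2 : ℝ) ≤ R := by exact_mod_cast hR
  have hS' : (1 : ℝ) ≤ S := by exact_mod_cast hS
  have hu' : (1 : ℝ) ≤ u := by exact_mod_cast hu
  have hH0 : 0 ≤ H := by
    have h3 := mul_nonneg (by linarith : (0 : ℝ) ≤ R - 1) hp
    have h4 := mul_nonneg (by linarith : (0 : ℝ) ≤ S - 1) hq
    simp only [hH]; linarith
  set A : Fin K × Fin L → ℝ := fun i => 3 * Real.cosh 2 ^ (i.1 : ℕ) *
    Real.exp (Real.cosh 2 * (H / 2) * |((i.2 : ℕ) : ℝ) - ((L : ℝ) - 1) / 2|) with hA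
  have hσ : 1 ≤ Real.cosh 2 := Real.one_le_cosh 2
  choose a ha1 ha2 using fun i : Fin K × Fin L =>
    exp_cheb_approx i.1 N ((((i.2 : ℕ) : ℝ) - ((L : ℝ) - 1) / 2) * (H / 2))
  have habs : ∀ x : ℝ, Real.cosh 2 * |x * (H / 2)| = Real.cosh 2 * (H / 2) * |x| := by
    intro x; rw [abs_mul, abs_of_nonneg (by linarith : 0 ≤ H / 2)]; ring
  simp only [habs] at ha1 ha2
  set ζ : Fin K × Fin L → ℝ := fun j => (((c j).1 * u + (c j).2 * v : ℕ) - m₀) / m₀ with hζ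
  set M : Fin K × Fin L → Fin K × Fin L → ℝ := fun i j : Fin K × Fin L =>
        ζ j ^ (i.1 : ℕ) *
        ((β ^ (c j).1 * γ ^ (c j).2) ^ (i.2 : ℕ) *
          Real.exp (-(((L : ℝ) - 1) / 2) * ((c j).1 * p + (c j).2 * q) -
            (((i.2 : ℕ) : ℝ) - ((L : ℝ) - 1) / 2) * (H / 2))) with hM
  have hζ1 : ∀ j, |ζ j| ≤ 1 := by
    intro j
    have h1 : ((c j).1 : ℝ) + 1 ≤ R := by exact_mod_cast (hcb j).1
    have h2 : ((c j).2 : ℝ) + 1 ≤ S := by exact_mod_cast (hcb j).2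
    apply abs_normalized_le hm (by positivity)
    rw [← hmax]; push_cast
    gcongr <;> linarith
  -- replacing `y` by the multiple of `ζ` which it approximates
  have hpert : ∀ i j, |M i j - ζ j ^ (i.1 : ℕ) *
      Real.exp ((((i.2 : ℕ) : ℝ) - ((L : ℝ) - 1) / 2) * (H / 2) * ζ j)| ≤
      Real.cosh 2 ^ (i.1 : ℕ) *
        Real.exp (Real.cosh 2 * (H / 2) * |((i.2 : ℕ) : ℝ) - ((L : ℝ) - 1) / 2|) *
        (Real.exp 2)⁻¹ ^ N := by
    intro i j
    have h1 : ((c j).1 : ℝ) + 1 ≤ R := by exact_mod_cast (hcb j).1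
    have h2 : ((c j).2 : ℝ) + 1 ≤ S := by exact_mod_cast (hcb j).2
    have hL' : (1 : ℝ) ≤ L := by exact_mod_cast hL
    set x : ℝ := ((i.2 : ℕ) : ℝ) - ((L : ℝ) - 1) / 2 with hx
    have hx1 : |x| ≤ L / 2 := by
      have h3 : ((i.2 : ℕ) : ℝ) + 1 ≤ L := by exact_mod_cast i.2.2
      have h4 : (0 : ℝ) ≤ ((i.2 : ℕ) : ℝ) := by positivity
      rw [abs_le]; constructor <;> simp only [hx] <;> linarith
    set δ : ℝ := (c j).1 * p + (c j).2 * q - H / 2 - H / 2 * ζ j with hδ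
    have hδ1 : |δ| ≤ (S - 1) * |u * q - v * p| := by
      have h3 : δ * (2 * m₀) = (u * q - v * p) *
          ((c j).2 * ((R : ℝ) - 1) - (c j).1 * ((S : ℝ) - 1)) := by
        have h4 : δ * (2 * m₀) = ((c j).1 * p + (c j).2 * q) * (2 * m₀) -
            H * ((c j).1 * u + (c j).2 * v) := by
          simp only [hδ, hζ]; push_cast; field_simp; ring
        rw [h4, ← hmax, hH]; ring
      have h5 : |(c j).2 * ((R : ℝ) - 1) - (c j).1 * ((S : ℝ) - 1)| ≤
          ((R : ℝ) - 1) * ((S : ℝ) - 1) := by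
        have h6 := mul_le_mul_of_nonneg_right (by linarith : ((c j).2 : ℝ) ≤ S - 1)
          (by linarith : (0 : ℝ) ≤ R - 1)
        have h7 := mul_le_mul_of_nonneg_right (by linarith : ((c j).1 : ℝ) ≤ R - 1)
          (by linarith : (0 : ℝ) ≤ S - 1)
        have h8 : 0 ≤ ((c j).2 : ℝ) * ((R : ℝ) - 1) :=
          mul_nonneg (Nat.cast_nonneg _) (by linarith)
        have h9 : 0 ≤ ((c j).1 : ℝ) * ((S : ℝ) - 1) :=
          mul_nonneg (Nat.cast_nonneg _) (by linarith)
        rw [abs_le]; constructor <;> linarith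
      have h10 : (R : ℝ) - 1 ≤ 2 * m₀ := by
        rw [← hmax]
        have h11 := mul_le_mul_of_nonneg_left hu' (by linarith : (0 : ℝ) ≤ R - 1)
        have h12 : 0 ≤ ((S : ℝ) - 1) * v := mul_nonneg (by linarith) (Nat.cast_nonneg _)
        linarith
      have h13 : |δ| * (2 * m₀) ≤ (S - 1) * |u * q - v * p| * (2 * m₀) := by
        calc |δ| * (2 * m₀) = |δ * (2 * m₀)| := by
              rw [abs_mul, abs_of_pos (by linarith : 0 < 2 * m₀)]
          _ = |u * q - v * p| * |(c j).2 * ((R : ℝ) - 1) - (c j).1 * ((S : ℝ) - 1)| := by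
              rw [h3, abs_mul]
          _ ≤ |u * q - v * p| * (((R : ℝ) - 1) * ((S : ℝ) - 1)) :=
              mul_le_mul_of_nonneg_left h5 (abs_nonneg _)
          _ = (S - 1) * |u * q - v * p| * (R - 1) := by ring
          _ ≤ _ := mul_le_mul_of_nonneg_left h10 (mul_nonneg (by linarith) (abs_nonneg _))
      exact le_of_mul_le_mul_right h13 (by linarith)
    have hK : 1 ≤ K := i.1.pos
    have hN0 : (1 : ℝ) ≤ N := by exact_mod_cast Nat.mul_pos hK hL
    have hxδ : 2 * |x * δ| ≤ Real.exp (-(2 * N)) := by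
      rw [abs_mul]
      have h3 : (S : ℝ) - 1 ≤ K := by
        have : (S : ℝ) ≤ K + 1 := by exact_mod_cast hSK
        linarith
      have h4 : |x| * |δ| ≤ L / 2 * (K * |u * q - v * p|) := by
        refine mul_le_mul hx1 (hδ1.trans ?_) (abs_nonneg _) (by positivity)
        exact mul_le_mul_of_nonneg_right h3 (abs_nonneg _)
      have h5 : (N : ℝ) * |u * q - v * p| ≤ Real.exp (-(2 * N)) := by
        rw [le_div_iff₀ (by linarith)] at hΛ
        rwa [mul_comm] at hΛ
      have h6 : (N : ℝ) = K * L := by simp [hN]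
      rw [h6] at h5 ⊢
      linarith
    have hxδ1 : |x * δ| ≤ 1 := by
      have : Real.exp (-(2 * N)) ≤ 1 := Real.exp_le_one_iff.2 (by linarith)
      linarith [abs_nonneg (x * δ)]
    have hMe : M i j = ζ j ^ (i.1 : ℕ) * (Real.exp (x * (H / 2) * ζ j) * Real.exp (x * δ)) := by
      simp only [hM]
      rw [normalized_pow p q _ _ _ _ _ _ _ hβ hγ, ← Real.exp_add]
      congr 2
      simp only [hx, hδ]; ring
    have hρ : (Real.exp 2)⁻¹ ^ N = Real.exp (-(2 * N)) := by
      rw [← Real.exp_neg, ← Real.exp_nat_mul]; congr 1; ring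
    have e1 : M i j - ζ j ^ (i.1 : ℕ) * Real.exp (x * (H / 2) * ζ j) =
        (ζ j ^ (i.1 : ℕ) * Real.exp (x * (H / 2) * ζ j)) * (Real.exp (x * δ) - 1) := by
      rw [hMe]; ring
    rw [e1, abs_mul, abs_mul, abs_pow, Real.abs_exp, hρ]
    have e2 := (Real.abs_exp_sub_one_le hxδ1).trans hxδ
    have e3 : |ζ j| ^ (i.1 : ℕ) ≤ Real.cosh 2 ^ (i.1 : ℕ) := by
      have := hζ1 j
      gcongr; linarith
    have e4 : Real.exp (x * (H / 2) * ζ j) ≤ Real.exp (Real.cosh 2 * (H / 2) * |x|) := by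
      apply Real.exp_le_exp.2
      refine (le_abs_self _).trans ?_
      rw [abs_mul, abs_mul, abs_of_nonneg (by linarith : 0 ≤ H / 2)]
      have e5 : |x| * (H / 2) * |ζ j| ≤ |x| * (H / 2) * 1 :=
        mul_le_mul_of_nonneg_left (hζ1 j) (by positivity)
      have e6 : 1 * (|x| * (H / 2)) ≤ Real.cosh 2 * (|x| * (H / 2)) :=
        mul_le_mul_of_nonneg_right hσ (by positivity)
      linarith
    gcongr
  have hmain := det_abs_le (ι := Fin K × Fin L) N (by simp [hN]) (Real.exp 2)
    (Real.one_le_exp (by norm_num)) A (fun i t => a i t)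
    (fun t j => Real.cos ((t : ℕ) * Real.arccos (ζ j)))
    (fun i j => M i j - ∑ t : Fin N, a i t * Real.cos ((t : ℕ) * Real.arccos (ζ j)))
    (by
      intro i t
      refine (ha1 i t).trans ?_
      simp only [hA]
      gcongr
      norm_num)
    (fun t j => Real.abs_cos_le_one _)
    (by
      intro i j
      have h1 := ha2 i (ζ j) (abs_le.1 (hζ1 j)).1 (abs_le.1 (hζ1 j)).2
      rw [Finset.sum_range] at h1
      have h2 := hpert i j
      have h3 := abs_add_le (M i j - ζ j ^ (i.1 : ℕ) *
        Real.exp ((((i.2 : ℕ) : ℝ) - ((L : ℝ) - 1) / 2) * (H / 2) * ζ j)) (ζ j ^ (i.1 : ℕ) *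
        Real.exp ((((i.2 : ℕ) : ℝ) - ((L : ℝ) - 1) / 2) * (H / 2) * ζ j) -
        ∑ t : Fin N, a i t * Real.cos ((t : ℕ) * Real.arccos (ζ j)))
      rw [sub_add_sub_cancel] at h3
      refine h3.trans ((add_le_add h2 h1).trans (le_of_eq ?_))
      simp only [hA]; ring)
  have hprod : ∏ i, A i ≤ 3 ^ N * Real.cosh 2 ^ (L * (K * (K - 1) / 2)) *
        Real.exp (Real.cosh 2 * (H / 2) * (K * ((L : ℝ) ^ 2 / 4))) := by
    simp only [hA, Finset.prod_mul_distrib]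
    have h1 : ∏ i : Fin K × Fin L, Real.cosh 2 ^ (i.1 : ℕ) =
        Real.cosh 2 ^ (L * (K * (K - 1) / 2)) := by
      rw [Fintype.prod_prod_type]
      simp only [Finset.prod_const, Finset.card_univ, Fintype.card_fin, Finset.prod_pow,
        Finset.prod_pow_eq_pow_sum]
      rw [← Finset.sum_range (fun i => i), Finset.sum_range_id, ← pow_mul, mul_comm _ L]
    rw [h1]
    simp only [Finset.prod_const, Finset.card_univ, Fintype.card_prod, Fintype.card_fin]
    have := prod_exp_centered_le K L (Real.cosh 2 * (H / 2)) (by positivity)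
    gcongr
  simp only [add_sub_cancel] at hmain
  refine hmain.trans ?_
  gcongr

/-! ### The two fundamental inequalities -/

theorem cast_half (K : ℕ) : ((K * (K - 1) / 2 : ℕ) : ℝ) = (K : ℝ) * (K - 1) / 2 := by
  rw [Nat.cast_div (even_iff_two_dvd.1 (Nat.even_mul_pred_self K)) (by norm_num)]
  rcases Nat.eq_zero_or_pos K with rfl | h
  · simp
  · push_cast [Nat.cast_sub h]; ring

/-- Logarithmic form of the comparison between the integral and the normalized determinant. -/
theorem log_det_le (K L R S u v : ℕ) (β γ : ℤ) (p q m₀ ym B : ℝ) (hp : 0 ≤ p) (hq : 0 ≤ q)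
    (hK : 1 ≤ K) (hL : 1 ≤ L) (hm : 0 < m₀) (c : Fin K × Fin L → ℕ × ℕ)
    (hc : Function.Injective c) (hcb : ∀ j, (c j).1 < R ∧ (c j).2 < S) (D : ℤ)
    (hD : D = (Matrix.of fun i j : Fin K × Fin L => (((c j).1 * u + (c j).2 * v).choose i.1 : ℤ) *
        (β ^ (c j).1 * γ ^ (c j).2) ^ (i.2 : ℕ)).det) (hD0 : D ≠ 0)
    (hB : |(Matrix.of fun i j : Fin K × Fin L =>
        ((((c j).1 * u + (c j).2 * v : ℕ) - m₀) / m₀) ^ (i.1 : ℕ) *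
        (((β : ℝ) ^ (c j).1 * (γ : ℝ) ^ (c j).2) ^ (i.2 : ℕ) *
          Real.exp (-(((L : ℝ) - 1) / 2) * ((c j).1 * p + (c j).2 * q) -
            (((i.2 : ℕ) : ℝ) - ((L : ℝ) - 1) / 2) * ym))).det| ≤ Real.exp B) :
    Real.log |(D : ℝ)| ≤ (K * L : ℝ) * ((K - 1) / 2) * (Real.log m₀ - Real.log K + 3 / 2) +
      (L - 1) / 4 * (R * S * (((R : ℝ) - 1) * p + ((S : ℝ) - 1) * q)) + B := by
  have h1 := det_relation K L R S u v β γ p q m₀ ym hp hq hL hm c hc hcb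
  rw [← hD] at h1
  have h2 := h1.trans (mul_le_mul_of_nonneg_left hB (by positivity))
  have hDpos : 0 < |(D : ℝ)| := abs_pos.2 (by exact_mod_cast hD0)
  have hfac : ∀ k : Fin K, ((k : ℕ).factorial : ℝ) ≠ 0 := fun k => by positivity
  have hprod : 0 < ∏ k : Fin K, ((k : ℕ).factorial : ℝ) :=
    Finset.prod_pos fun k _ => by positivity
  have h3 := Real.log_le_log (by positivity) h2
  rw [Real.log_mul hDpos.ne' (by positivity), Real.log_pow, Real.log_prod (fun k _ => hfac k),
    Real.log_mul (by positivity) (by positivity), Real.log_mul (by positivity) (by positivity),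
    Real.log_pow, Real.log_exp, Real.log_exp, Nat.cast_mul, cast_half,
    ← Finset.sum_range (fun k => Real.log (k.factorial : ℝ))] at h3
  have h4 := mul_le_mul_of_nonneg_left (le_sum_log_factorial K hK) (Nat.cast_nonneg (α := ℝ) L)
  linarith

theorem log_factorial_le (N : ℕ) : Real.log N.factorial ≤ N * Real.log N := by
  rw [← Real.log_pow]
  apply Real.log_le_log (by positivity)
  exact_mod_cast Nat.factorial_le_pow N

/-- The `2`-adic divisibility of the nonzero determinant against the trivial bound for its size. -/
theorem fund_two_adic (K L g R₂ S₂ R S u v : ℕ) (β γ : ℤ) (p q m₀ : ℝ) (hp : 0 ≤ p) (hq : 0 ≤ q)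
    (hβp : |(β : ℝ)| = Real.exp p) (hγq : |(γ : ℝ)| = Real.exp q)
    (hβγ : IsCoprime β γ) (hβ1 : 1 < β.natAbs) (hγ1 : 1 < γ.natAbs)
    (hβ : 4 ∣ β - 1) (hγ : 4 ∣ γ - 1) (huv : Odd u ∨ Odd v)
    (hK : 1 ≤ K) (hL : 1 ≤ L) (hg : 0 < g) (hLg : L ≤ g ^ 2) (hKL : (K - 1) * L < R₂ * S₂)
    (hR : R = R₂ + g - 1) (hS : S = S₂ + g - 1) (hR1 : 1 ≤ R) (hS1 : 1 ≤ S)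
    (hinj : ∀ r s r' s', r < R₂ → s < S₂ → r' < R₂ → s' < S₂ →
      r * u + s * v = r' * u + s' * v → r = r' ∧ s = s')
    (hm : 0 < m₀) (hmax : ((R : ℝ) - 1) * u + ((S : ℝ) - 1) * v = 2 * m₀)
    (h : (4 : ℤ) ^ (K * L) ∣ β ^ v - γ ^ u) :
    (K * L : ℝ) * (K * L - K) * Real.log 2 ≤
      (K * L : ℝ) * ((K - 1) / 2) * (Real.log m₀ - Real.log K + 3 / 2) +
      (L - 1) / 4 * (R * S * (((R : ℝ) - 1) * p + ((S : ℝ) - 1) * q)) +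
      (K * L : ℝ) * Real.log (K * L) +
      (K * L : ℝ) * L * (((R : ℝ) - 1) * p + ((S : ℝ) - 1) * q) / 8 := by
  obtain ⟨c, hc, hcb, hdet⟩ := exists_columns hβγ hβ1 hγ1 u v K L g R₂ S₂ hg hLg hKL hinj
  rw [← hR, ← hS] at hcb
  rw [det_choose K L (fun j => (c j).1 * u + (c j).2 * v)
    (fun l j => (β ^ (c j).1 * γ ^ (c j).2) ^ (l : ℕ))] at hdet
  set D : ℤ := (Matrix.of fun i j : Fin K × Fin L => (((c j).1 * u + (c j).2 * v).choose i.1 : ℤ) *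
        (β ^ (c j).1 * γ ^ (c j).2) ^ (i.2 : ℕ)).det with hD
  have hD0 : D ≠ 0 := right_ne_zero_of_mul hdet
  have hdvd := two_adic_det hβ hγ huv h c
  rw [← hD] at hdvd
  have hlow := Int.le_of_dvd (abs_pos.2 (mul_ne_zero (pow_ne_zero _ (by norm_num)) hD0))
    ((dvd_abs _ _).2 hdvd)
  rw [abs_mul, abs_pow] at hlow
  have hlow' : (4 : ℝ) ^ (K * L * (K * L - 1) / 2) ≤ 4 ^ (L * (K * (K - 1) / 2)) * |(D : ℝ)| := by
    exact_mod_cast hlow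
  have hDpos : 0 < |(D : ℝ)| := abs_pos.2 (by exact_mod_cast hD0)
  have h1 := Real.log_le_log (by positivity) hlow'
  rw [Real.log_mul (by positivity) hDpos.ne', Real.log_pow, Real.log_pow, cast_half,
    Nat.cast_mul L (K * (K - 1) / 2), cast_half, Nat.cast_mul K L] at h1
  have h4 : Real.log 4 = 2 * Real.log 2 := by
    rw [show (4 : ℝ) = 2 ^ 2 by norm_num, Real.log_pow]; norm_num
  rw [h4] at h1
  have hhat := det_hat_two_adic K L R S u v β γ p q m₀ hp hq hβp hγq hm hR1 hS1 hmax c hcb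
  have hN : 1 ≤ K * L := Nat.mul_pos hK hL
  have hfac : ((K * L).factorial : ℝ) ≤ Real.exp ((K * L : ℝ) * Real.log (K * L)) := by
    have := log_factorial_le (K * L)
    rw [Real.log_le_iff_le_exp (by positivity)] at this
    exact_mod_cast this
  have hB := hhat.trans (mul_le_mul_of_nonneg_right hfac (Real.exp_pos _).le)
  rw [← Real.exp_add] at hB
  have h2 := log_det_le K L R S u v β γ p q m₀ _ _ hp hq hK hL hm c hc hcb D hD hD0 hB
  linarith

/-- If `u q - v p` is tiny, the analytic bound for the determinant against the fact that a nonzero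
integer is at least `1` in absolute value. -/
theorem fund_arch (K L g R₂ S₂ R S u v : ℕ) (b c : ℕ) (p q m₀ : ℝ) (hp : 0 ≤ p) (hq : 0 ≤ q)
    (hβp : (b : ℝ) = Real.exp p) (hγq : (c : ℝ) = Real.exp q)
    (hbc : Nat.Coprime b c) (hb1 : 1 < b) (hc1 : 1 < c)
    (hu : 1 ≤ u) (hSK : S ≤ K + 1)
    (hK : 1 ≤ K) (hL : 1 ≤ L) (hg : 0 < g) (hLg : L ≤ g ^ 2) (hKL : (K - 1) * L < R₂ * S₂)
    (hR : R = R₂ + g - 1) (hS : S = S₂ + g - 1) (hR1 : 2 ≤ R) (hS1 : 1 ≤ S)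
    (hinj : ∀ r s r' s', r < R₂ → s < S₂ → r' < R₂ → s' < S₂ →
      r * u + s * v = r' * u + s' * v → r = r' ∧ s = s')
    (hm : 0 < m₀) (hmax : ((R : ℝ) - 1) * u + ((S : ℝ) - 1) * v = 2 * m₀)
    (hΛ : |u * q - v * p| ≤ Real.exp (-(2 * (K * L : ℕ))) / (K * L : ℕ)) :
    (K * L : ℝ) * (K * L - 1) ≤
      (K * L : ℝ) * ((K - 1) / 2) *
        (Real.log m₀ - Real.log K + 3 / 2 + Real.log (Real.cosh 2)) +
      (L - 1) / 4 * (R * S * (((R : ℝ) - 1) * p + ((S : ℝ) - 1) * q)) +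
      (K * L : ℝ) * (2 * Real.log (K * L) + Real.log 6) +
      Real.cosh 2 * ((K * L : ℝ) * L * (((R : ℝ) - 1) * p + ((S : ℝ) - 1) * q) / 8) := by
  have hβγ : IsCoprime (b : ℤ) (c : ℤ) := Nat.isCoprime_iff_coprime.2 hbc
  obtain ⟨col, hc, hcb, hdet⟩ := exists_columns hβγ (by simpa using hb1) (by simpa using hc1)
    u v K L g R₂ S₂ hg hLg hKL hinj
  rw [← hR, ← hS] at hcb
  rw [det_choose K L (fun j => (col j).1 * u + (col j).2 * v)
    (fun l j => ((b : ℤ) ^ (col j).1 * (c : ℤ) ^ (col j).2) ^ (l : ℕ))] at hdet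
  set D : ℤ := (Matrix.of fun i j : Fin K × Fin L =>
    (((col j).1 * u + (col j).2 * v).choose i.1 : ℤ) *
        ((b : ℤ) ^ (col j).1 * (c : ℤ) ^ (col j).2) ^ (i.2 : ℕ)).det with hD
  have hD0 : D ≠ 0 := right_ne_zero_of_mul hdet
  have hlow : 0 ≤ Real.log |(D : ℝ)| := by
    apply Real.log_nonneg
    exact_mod_cast Int.one_le_abs hD0
  have hN : 1 ≤ K * L := Nat.mul_pos hK hL
  have hN0 : (0 : ℝ) < (K * L : ℝ) := by exact_mod_cast hN
  have hhat := det_hat_arch K L R S u v b c p q m₀ hp hq hβp hγq hm hR1 hS1 hu hSK hL hmax hΛ col hcb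
  have hσ : 0 < Real.cosh 2 := Real.cosh_pos 2
  have hfac := log_factorial_le (K * L)
  set B : ℝ := Real.log ((2 * (K * L : ℕ)) ^ (K * L) * (K * L).factorial *
      (3 ^ (K * L) * Real.cosh 2 ^ (L * (K * (K - 1) / 2)) *
        Real.exp (Real.cosh 2 * ((((R : ℝ) - 1) * p + ((S : ℝ) - 1) * q) / 2) *
        (K * ((L : ℝ) ^ 2 / 4)))) * (Real.exp 2)⁻¹ ^ (K * L * (K * L - 1) / 2)) with hB
  have hpos : (0 : ℝ) < 2 * (K * L : ℕ) := by push_cast; positivity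
  have h2 := log_det_le K L R S u v b c p q m₀ _ B hp hq hK hL hm col hc hcb D hD hD0
    (by rw [hB, Real.exp_log (by positivity)]; exact_mod_cast hhat)
  have h6 : Real.log 6 = Real.log 2 + Real.log 3 := by
    rw [← Real.log_mul (by norm_num) (by norm_num)]; norm_num
  rw [Real.log_mul (by positivity) (by positivity), Real.log_mul (by positivity) (by positivity),
    Real.log_mul (by positivity) (by positivity), Real.log_mul (by positivity) (by positivity),
    Real.log_mul (by positivity) (by positivity), Real.log_pow, Real.log_pow, Real.log_pow,
    Real.log_pow, Real.log_inv, Real.log_exp, Real.log_exp, cast_half,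
    Nat.cast_mul L (K * (K - 1) / 2), cast_half,
    Real.log_mul (by norm_num) (by positivity), Nat.cast_mul K L] at hB
  push_cast at hfac hB
  rw [h6]
  linarith

/-! ### Numerical contradiction -/

/-- The size of `K` relative to the box and to the heights, for the boxes in use. -/
theorem size_bounds (p q L K r s : ℝ) (hp : 1.098 ≤ p) (hq : 1.098 ≤ q) (hL : 15 ≤ L)
    (hK : 9 * L * p * q ≤ K) (hr : 0 ≤ r) (hr' : r ≤ 3 * L * q + L / 4) (hs : 0 ≤ s)
    (hs' : s ≤ 3 * L * p + L / 4) :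
    r * p + s * q ≤ 0.7173 * K ∧ (r + 1) * (s + 1) ≤ 1.2016 * (K * L) ∧ 162 ≤ K ∧
      10.8 * L ≤ K ∧ Real.log (K * L) ≤ 0.0485 * K := by
  have hp0 : 0 < p := by linarith
  have hq0 : 0 < q := by linarith
  have hL0 : 0 < L := by linarith
  have h1 : 1.098 * p ≤ p * q := by nlinarith
  have h2 : 1.098 * q ≤ p * q := by nlinarith
  have h3 : 1.098 * 1.098 ≤ p * q := by nlinarith
  have h4 : L * (1.098 * p) ≤ L * (p * q) := mul_le_mul_of_nonneg_left h1 hL0.le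
  have h5 : L * (1.098 * q) ≤ L * (p * q) := mul_le_mul_of_nonneg_left h2 hL0.le
  have h6 : L * (1.098 * 1.098) ≤ L * (p * q) := mul_le_mul_of_nonneg_left h3 hL0.le
  have hKL : 10.8 * L ≤ K := by nlinarith
  have hK162 : 162 ≤ K := by linarith
  refine ⟨?_, ?_, hK162, hKL, ?_⟩
  · have e1 : r * p ≤ (3 * L * q + L / 4) * p := mul_le_mul_of_nonneg_right hr' hp0.le
    have e2 : s * q ≤ (3 * L * p + L / 4) * q := mul_le_mul_of_nonneg_right hs' hq0.le
    nlinarith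
  · have e1 : r + 1 ≤ L * (3 * q + 19 / 60) := by nlinarith
    have e2 : s + 1 ≤ L * (3 * p + 19 / 60) := by nlinarith
    have e3 : (r + 1) * (s + 1) ≤ L * (3 * q + 19 / 60) * (L * (3 * p + 19 / 60)) :=
      mul_le_mul e1 e2 (by positivity) (by positivity)
    have e4 : 9 * L * p * q * L ≤ K * L := mul_le_mul_of_nonneg_right hK hL0.le
    have e5 : (3 * q + 19 / 60) * (3 * p + 19 / 60) ≤ 1.2016 * 9 * (p * q) := by nlinarith
    have e6 := mul_le_mul_of_nonneg_left e5 (mul_pos hL0 hL0).le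
    nlinarith
  · have hK0 : 0 < K := by linarith
    have hexp : (54.5 : ℝ) ≤ Real.exp 4 := by
      have : Real.exp 4 = Real.exp 1 ^ 4 := by rw [← Real.exp_nat_mul]; norm_num
      rw [this]
      calc (54.5 : ℝ) ≤ 2.7182818283 ^ 4 := by norm_num
        _ ≤ _ := pow_le_pow_left₀ (by norm_num) Real.exp_one_gt_d9.le 4
    have e0 : 10.8 * L * K ≤ K * K := mul_le_mul_of_nonneg_right hKL hK0.le
    have e1 : K * L ≤ (K / 3.286) ^ 2 := by
      rw [div_pow, le_div_iff₀ (by norm_num)]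
      nlinarith
    have e2 : Real.log (K * L) ≤ 2 * Real.log (K / 3.286) := by
      have := Real.log_le_log (by positivity) e1
      rwa [Real.log_pow] at this
    have e3 : Real.log (K / 3.286) ≤ K / 3.286 / Real.exp 4 - 1 + 4 := by
      have := Real.log_le_sub_one_of_pos (show 0 < K / 3.286 / Real.exp 4 by positivity)
      rw [Real.log_div (by positivity) (by positivity), Real.log_exp] at this
      linarith
    have e4 : K / 3.286 / Real.exp 4 ≤ K / 3.286 / 54.5 := by gcongr
    have : K / 3.286 / 54.5 ≤ 0.0056 * K := by
      rw [div_div, div_le_iff₀ (by norm_num)]; nlinarith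
    linarith

theorem log_cosh_two : Real.cosh 2 ≤ 3.7623 ∧ Real.log (Real.cosh 2) ≤ 1.34 := by
  have h2 : Real.exp 2 = Real.exp 1 ^ 2 := by rw [← Real.exp_nat_mul]; norm_num
  have hl := Real.exp_one_gt_d9
  have hu := Real.exp_one_lt_d9
  have hc : Real.cosh 2 ≤ 3.7623 := by
    rw [Real.cosh_eq, Real.exp_neg, h2]
    have e1 : Real.exp 1 ^ 2 ≤ 2.7182818286 ^ 2 := by gcongr
    have e2 : (Real.exp 1 ^ 2)⁻¹ ≤ (2.7182818283 ^ 2)⁻¹ := by gcongr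
    norm_num at e1 e2 ⊢
    linarith
  refine ⟨hc, ?_⟩
  rw [Real.log_le_iff_le_exp (Real.cosh_pos 2)]
  refine hc.trans ?_
  have : Real.exp 1.34 = Real.exp 1 * (Real.exp 0.17) ^ 2 := by
    rw [← Real.exp_nat_mul, ← Real.exp_add]; norm_num
  rw [this]
  have h3 := Real.quadratic_le_exp_of_nonneg (show (0 : ℝ) ≤ 0.17 by norm_num)
  calc (3.7623 : ℝ) ≤ 2.7182818283 * (1 + 0.17 + 0.17 ^ 2 / 2) ^ 2 := by norm_num
    _ ≤ _ := by gcongr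

theorem log_height_ratio (X K m : ℝ) (hX : 1 ≤ X) (hK : 0 < K) (hm : 0 < m)
    (h : 2 * m ≤ X * (0.7173 * K)) : Real.log m - Real.log K ≤ Real.log X - 1.02 := by
  have h1 : m ≤ X * K * 0.35865 := by linarith
  have h2 := Real.log_le_log hm h1
  rw [Real.log_mul (by positivity) (by norm_num), Real.log_mul (by positivity) (by positivity)] at h2
  have : Real.log 0.35865 ≤ -1.02 := by
    rw [Real.log_le_iff_le_exp (by norm_num)]
    have : Real.exp (-1.02) = (Real.exp 1)⁻¹ * Real.exp (-0.02) := by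
      rw [← Real.exp_neg, ← Real.exp_add]; norm_num
    rw [this]
    have h3 := Real.add_one_le_exp (-0.02)
    have h4 : (2.7182818286 : ℝ)⁻¹ ≤ (Real.exp 1)⁻¹ := by
      gcongr; exact Real.exp_one_lt_d9.le
    calc (0.35865 : ℝ) ≤ 2.7182818286⁻¹ * (-0.02 + 1) := by norm_num
      _ ≤ _ := by gcongr
  linarith

/-- The inequality of `fund_two_adic` fails for the chosen sizes of `K` and of the box as soon as
`L ≥ 1.29 log X + 2.6`. Here `r = R - 1` and `s = S - 1`. -/
theorem two_adic_numeric (p q L K r s X m : ℝ) (hp : 1.098 ≤ p) (hq : 1.098 ≤ q) (hL : 15 ≤ L)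
    (hK : 9 * L * p * q ≤ K) (hr : 0 ≤ r) (hr' : r ≤ 3 * L * q + L / 4) (hs : 0 ≤ s)
    (hs' : s ≤ 3 * L * p + L / 4) (hX : 1 ≤ X) (hm : 0 < m)
    (hmX : 2 * m ≤ X * (r * p + s * q)) (hLX : 1.29 * Real.log X + 2.6 ≤ L)
    (h : (K * L) * (K * L - K) * Real.log 2 ≤
      (K * L) * ((K - 1) / 2) * (Real.log m - Real.log K + 3 / 2) +
      (L - 1) / 4 * ((r + 1) * (s + 1) * (r * p + s * q)) + (K * L) * Real.log (K * L) +
      (K * L) * L * (r * p + s * q) / 8) : False := by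
  obtain ⟨h1, h2, h3, h4, h5⟩ := size_bounds p q L K r s hp hq hL hK hr hr' hs hs'
  have hK0 : 0 < K := by linarith
  have hL0 : 0 < L := by linarith
  have hp0 : 0 < p := by linarith
  have hq0 : 0 < q := by linarith
  have hH : 0 ≤ r * p + s * q := by positivity
  have hlogX := Real.log_nonneg hX
  have h6 := log_height_ratio X K m hX hK0 hm (hmX.trans (by gcongr))
  have hN : 0 < K * L := by positivity
  have a1 : (L - 1) / 4 * ((r + 1) * (s + 1) * (r * p + s * q)) ≤
      L / 4 * (1.2016 * (K * L) * (0.7173 * K)) := by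
    apply mul_le_mul (by linarith) (mul_le_mul h2 h1 hH (by positivity)) (by positivity)
      (by positivity)
  have a2 : (K * L) * ((K - 1) / 2) * (Real.log m - Real.log K + 3 / 2) ≤
      (K * L) * (K / 2) * (Real.log X + 0.48) := by
    apply (mul_le_mul_of_nonneg_left (show _ ≤ Real.log X + 0.48 by linarith)
      (mul_nonneg hN.le (by linarith))).trans
    gcongr
    linarith
  have a3 : (K * L) * Real.log (K * L) ≤ (K * L) * (0.0485 * K) := by gcongr
  have a4 : (K * L) * L * (r * p + s * q) / 8 ≤ (K * L) * L * (0.7173 * K) / 8 := by gcongr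
  have a5 : (K * L) * (K * L - K) * 0.6931 ≤ (K * L) * (K * L - K) * Real.log 2 := by
    have : 0 ≤ K * L - K := by nlinarith
    have := Real.log_two_gt_d9
    gcongr
    linarith
  have key : (K * L) * K * (0.6931 * (L - 1)) ≤ (K * L) * K *
      ((Real.log X + 0.48) / 2 + L / 4 * (1.2016 * 0.7173) + 0.0485 + L * 0.7173 / 8) := by
    linarith
  have := le_of_mul_le_mul_left key (by positivity)
  linarith

/-- The inequality of `fund_arch` fails for the chosen sizes of `K` and of the box as soon as
`L ≥ 1.29 log X + 2.6`. Here `r = R - 1` and `s = S - 1`. -/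
theorem arch_numeric (p q L K r s X m : ℝ) (hp : 1.098 ≤ p) (hq : 1.098 ≤ q) (hL : 15 ≤ L)
    (hK : 9 * L * p * q ≤ K) (hr : 0 ≤ r) (hr' : r ≤ 3 * L * q + L / 4) (hs : 0 ≤ s)
    (hs' : s ≤ 3 * L * p + L / 4) (hX : 1 ≤ X) (hm : 0 < m)
    (hmX : 2 * m ≤ X * (r * p + s * q)) (hLX : 1.29 * Real.log X + 2.6 ≤ L)
    (h : (K * L) * (K * L - 1) ≤
      (K * L) * ((K - 1) / 2) * (Real.log m - Real.log K + 3 / 2 + Real.log (Real.cosh 2)) +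
      (L - 1) / 4 * ((r + 1) * (s + 1) * (r * p + s * q)) +
      (K * L) * (2 * Real.log (K * L) + Real.log 6) +
      Real.cosh 2 * ((K * L) * L * (r * p + s * q) / 8)) : False := by
  obtain ⟨h1, h2, h3, h4, h5⟩ := size_bounds p q L K r s hp hq hL hK hr hr' hs hs'
  obtain ⟨c1, c2⟩ := log_cosh_two
  have hK0 : 0 < K := by linarith
  have hL0 : 0 < L := by linarith
  have hp0 : 0 < p := by linarith
  have hq0 : 0 < q := by linarith
  have hH : 0 ≤ r * p + s * q := by positivity
  have hlogX := Real.log_nonneg hX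
  have h6 := log_height_ratio X K m hX hK0 hm (hmX.trans (by gcongr))
  have hN : 0 < K * L := by positivity
  have hlog6 : Real.log 6 ≤ 1.8 := by
    have e1 : Real.log 6 = Real.log 2 + Real.log 3 := by
      rw [← Real.log_mul (by norm_num) (by norm_num)]; norm_num
    have e2 : Real.log 3 ≤ 1.104 := by
      have e3 := Real.log_le_sub_one_of_pos (show 0 < 3 / Real.exp 1 by positivity)
      rw [Real.log_div (by norm_num) (by positivity), Real.log_exp] at e3
      have e4 : 3 / Real.exp 1 ≤ 3 / 2.7182818283 := by
        gcongr; exact Real.exp_one_gt_d9.le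
      norm_num at e4 ⊢
      linarith
    have := Real.log_two_lt_d9
    linarith
  have a1 : (L - 1) / 4 * ((r + 1) * (s + 1) * (r * p + s * q)) ≤
      L / 4 * (1.2016 * (K * L) * (0.7173 * K)) := by
    apply mul_le_mul (by linarith) (mul_le_mul h2 h1 hH (by positivity)) (by positivity)
      (by positivity)
  have a2 : (K * L) * ((K - 1) / 2) *
      (Real.log m - Real.log K + 3 / 2 + Real.log (Real.cosh 2)) ≤
      (K * L) * (K / 2) * (Real.log X + 1.82) := by
    apply (mul_le_mul_of_nonneg_left (show _ ≤ Real.log X + 1.82 by linarith)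
      (mul_nonneg hN.le (by linarith))).trans
    gcongr
    linarith
  have a3 : (K * L) * (2 * Real.log (K * L) + Real.log 6) ≤ (K * L) * (0.1082 * K) := by
    gcongr
    linarith
  have a4 : Real.cosh 2 * ((K * L) * L * (r * p + s * q) / 8) ≤
      3.7623 * ((K * L) * L * (0.7173 * K) / 8) := by gcongr
  have a5 : (K * L) * 1 ≤ (K * L) * (0.0062 * K) := by
    gcongr
    linarith
  have key : (K * L) * K * L ≤ (K * L) * K *
      ((Real.log X + 1.82) / 2 + L / 4 * (1.2016 * 0.7173) + 0.1144 + L * 3.7623 * 0.7173 / 8) := by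
    linarith
  have := le_of_mul_le_mul_left key (by positivity)
  linarith

/-! ### Linear form bounds with chosen parameters -/

/-- The number of monomials `K`, as a function of the second parameter `L` and the heights. -/
noncomputable def paramK (L b c : ℕ) : ℕ := ⌊9 * (L : ℝ) * Real.log b * Real.log c⌋₊ + 1

theorem exists_ceil_sqrt (L : ℕ) (hL : 15 ≤ L) : ∃ g : ℕ, 0 < g ∧ L ≤ g ^ 2 ∧ 4 * g ≤ L + 4 := by
  refine ⟨Nat.sqrt (L - 1) + 1, by positivity, ?_, ?_⟩
  · have := Nat.lt_succ_sqrt' (L - 1)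
    simp only [Nat.succ_eq_add_one] at this
    omega
  · have h := Nat.sqrt_le' (L - 1)
    by_cases h3 : Nat.sqrt (L - 1) ≤ 3
    · omega
    · have : 4 * Nat.sqrt (L - 1) ≤ Nat.sqrt (L - 1) ^ 2 := by nlinarith
      omega

theorem log_three_le {b : ℕ} (hb : 3 ≤ b) : 1.098 ≤ Real.log b := by
  have h3 : (3 : ℝ) ≤ b := by exact_mod_cast hb
  rw [Real.le_log_iff_exp_le (by linarith)]
  refine le_trans ?_ h3
  have : Real.exp 1.098 = Real.exp 1 * (Real.exp (-0.0098))⁻¹ ^ 10 := by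
    rw [← Real.exp_neg, ← Real.exp_nat_mul, ← Real.exp_add]; norm_num
  rw [this]
  have h1 := Real.add_one_le_exp (-0.0098)
  have h2 : (Real.exp (-0.0098))⁻¹ ≤ (-0.0098 + 1)⁻¹ := by
    apply inv_anti₀ (by norm_num) h1
  calc _ ≤ 2.7182818286 * ((-0.0098 + 1)⁻¹) ^ 10 := by
        gcongr; exact Real.exp_one_lt_d9.le
    _ ≤ (3 : ℝ) := by norm_num

/-- Distinct pairs in the box `[0, R) × [0, S)` give distinct values of `r u + s v`, as soon as
`u` and `v` are coprime and one of them exceeds the corresponding side. -/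
theorem box_injective {u v R S : ℕ} (hu : 0 < u) (hv : 0 < v) (huv : Nat.Coprime u v)
    (h : R ≤ v ∨ S ≤ u) (r s r' s' : ℕ) (hr : r < R) (hs : s < S) (hr' : r' < R) (hs' : s' < S)
    (he : r * u + s * v = r' * u + s' * v) : r = r' ∧ s = s' := by
  have hu0 : (u : ℤ) ≠ 0 := by exact_mod_cast hu.ne'
  have hv0 : (v : ℤ) ≠ 0 := by exact_mod_cast hv.ne'
  have he' : ((r : ℤ) - r') * u = (s' - s) * v := by
    have : (r : ℤ) * u + s * v = r' * u + s' * v := by exact_mod_cast he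
    linarith
  have hco : IsCoprime (u : ℤ) v := Nat.isCoprime_iff_coprime.2 huv
  have key : ((r : ℤ) - r' = 0) ∨ ((s' : ℤ) - s = 0) := by
    rcases h with h | h
    · left
      apply Int.eq_zero_of_abs_lt_dvd (m := v)
      · exact hco.symm.dvd_of_dvd_mul_right (Dvd.intro_left _ he'.symm)
      · rw [abs_lt]; omega
    · right
      apply Int.eq_zero_of_abs_lt_dvd (m := u)
      · exact hco.dvd_of_dvd_mul_right (Dvd.intro_left _ he')
      · rw [abs_lt]; omega
  rcases key with k | k
  · rw [k, zero_mul] at he'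
    have := (mul_eq_zero.1 he'.symm).resolve_right hv0
    omega
  · rw [k, zero_mul] at he'
    have := (mul_eq_zero.1 he').resolve_right hu0
    omega

theorem pow_ne_of_coprime {β γ : ℤ} (h : IsCoprime β γ) (hγ : 1 < γ.natAbs) {v u : ℕ}
    (hu : 0 < u) : β ^ v ≠ γ ^ u := by
  intro he
  have h1 : IsCoprime (γ ^ u) γ := he ▸ h.pow_left
  have h2 : IsUnit γ := h1.isUnit_of_dvd' (dvd_pow_self _ hu.ne') dvd_rfl
  rw [Int.isUnit_iff_natAbs_eq] at h2
  omega

/-- The choice of the boxes `R₂ × S₂` and `R × S` for given heights `p`, `q` and given `K`, `L`. -/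
theorem exists_params {L K : ℕ} {p q : ℝ} (hp : 1.098 ≤ p) (hq : 1.098 ≤ q) (hL : 15 ≤ L)
    (hK1 : 9 * (L : ℝ) * p * q < K) (hK2 : (K : ℝ) - 1 ≤ 9 * (L : ℝ) * p * q) :
    ∃ R₂ S₂ R S g : ℕ, 0 < g ∧ L ≤ g ^ 2 ∧ (K - 1) * L < R₂ * S₂ ∧ R = R₂ + g - 1 ∧
      S = S₂ + g - 1 ∧ 2 ≤ R ∧ 1 ≤ S ∧ S ≤ K + 1 ∧ (R₂ : ℝ) - 1 ≤ 3 * L * q ∧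
      (S₂ : ℝ) - 1 ≤ 3 * L * p ∧ (R : ℝ) - 1 ≤ 3 * L * q + L / 4 ∧
      (S : ℝ) - 1 ≤ 3 * L * p + L / 4 := by
  obtain ⟨g, hg, hLg, hg4⟩ := exists_ceil_sqrt L hL
  have hLr : (15 : ℝ) ≤ L := by exact_mod_cast hL
  have hp0 : 0 < p := by linarith
  have hq0 : 0 < q := by linarith
  have hLp : L * p * 1.098 ≤ L * p * q := mul_le_mul_of_nonneg_left hq (by positivity)
  have hLp' : (15 : ℝ) * p ≤ L * p := mul_le_mul_of_nonneg_right hLr hp0.le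
  have hLq' : (15 : ℝ) * q ≤ L * q := mul_le_mul_of_nonneg_right hLr hq0.le
  have hLp'' : (L : ℝ) * 1.098 ≤ L * p := mul_le_mul_of_nonneg_left hp (by positivity)
  have hR1 := Nat.lt_floor_add_one (3 * (L : ℝ) * q)
  have hR2 := Nat.floor_le (a := 3 * (L : ℝ) * q) (by positivity)
  have hS1 := Nat.lt_floor_add_one (3 * (L : ℝ) * p)
  have hS2 := Nat.floor_le (a := 3 * (L : ℝ) * p) (by positivity)
  -- `R₂ = ⌊3 L q⌋ + 1` and `S₂ = ⌊3 L p⌋ + 1`, so that `R₂ S₂ > 9 L² p q ≥ (K - 1) L`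
  generalize ⌊3 * (L : ℝ) * q⌋₊ = r at *
  generalize ⌊3 * (L : ℝ) * p⌋₊ = s at *
  have hgr : (4 : ℝ) * g ≤ L + 4 := by exact_mod_cast hg4
  have hRc : ((r + 1 + g - 1 : ℕ) : ℝ) = r + g := by
    rw [show r + 1 + g - 1 = r + g by omega]; push_cast; ring
  have hSc : ((s + 1 + g - 1 : ℕ) : ℝ) = s + g := by
    rw [show s + 1 + g - 1 = s + g by omega]; push_cast; ring
  refine ⟨r + 1, s + 1, r + 1 + g - 1, s + 1 + g - 1, g, hg, hLg, ?_, rfl, rfl, ?_, by omega, ?_,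
    by push_cast; linarith, by push_cast; linarith, by rw [hRc]; linarith, by rw [hSc]; linarith⟩
  · have hK0 : 1 ≤ K := by
      have : (0 : ℝ) < K := lt_of_le_of_lt (by positivity) hK1
      exact_mod_cast this
    have : ((K - 1 : ℕ) : ℝ) * L < ((r + 1) * (s + 1) : ℕ) := by
      rw [Nat.cast_sub hK0]
      push_cast
      have e1 := mul_lt_mul'' hR1 hS1 (by positivity) (by positivity)
      have e2 := mul_le_mul_of_nonneg_right hK2 (by positivity : (0 : ℝ) ≤ L)
      linarith
    exact_mod_cast this
  · have : (1 : ℝ) ≤ r := by linarith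
    have : 1 ≤ r := by exact_mod_cast this
    omega
  · have : ((s + 1 + g - 1 : ℕ) : ℝ) ≤ K + 1 := by
      rw [hSc]
      linarith
    exact_mod_cast this

theorem paramK_bounds {L b c : ℕ} (hb : 3 ≤ b) (hc : 3 ≤ c) :
    9 * (L : ℝ) * Real.log b * Real.log c < paramK L b c ∧
    (paramK L b c : ℝ) - 1 ≤ 9 * (L : ℝ) * Real.log b * Real.log c := by
  have hp := log_three_le hb
  have hq := log_three_le hc
  have hp0 : 0 < Real.log b := by linarith
  have hq0 : 0 < Real.log c := by linarith
  unfold paramK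
  push_cast
  exact ⟨Nat.lt_floor_add_one _, by simpa using Nat.floor_le (by positivity)⟩

/-- For `K = paramK L b c` the power `4 ^ (K L)` does not divide `β ^ v - γ ^ u`. Injectivity of
`r u + s v` on the box needs `R₂ ≤ v` or `S₂ ≤ u`; the small `u` and `v` left out are handled by
comparing sizes. -/
theorem two_adic_core {L b c u v : ℕ} {β γ : ℤ} {X : ℝ} (hb : 3 ≤ b) (hc : 3 ≤ c)
    (hβb : β.natAbs = b) (hγc : γ.natAbs = c) (hβγ : IsCoprime β γ) (hβ : 4 ∣ β - 1)
    (hγ : 4 ∣ γ - 1) (hu : 0 < u) (hv : 0 < v) (huv : Nat.Coprime u v) (hX : 1 ≤ X)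
    (huX : u ≤ X * Real.log b) (hvX : v ≤ X * Real.log c) (hL : 15 ≤ L)
    (hLX : 1.29 * Real.log X + 2.6 ≤ L) : ¬ (4 : ℤ) ^ (paramK L b c * L) ∣ β ^ v - γ ^ u := by
  intro hdvd
  have hp := log_three_le hb
  have hq := log_three_le hc
  have hb0 : (0 : ℝ) < b := by exact_mod_cast (by omega : 0 < b)
  have hc0 : (0 : ℝ) < c := by exact_mod_cast (by omega : 0 < c)
  have hβp : |(β : ℝ)| = Real.exp (Real.log b) := by
    rw [Real.exp_log hb0, ← hβb, Nat.cast_natAbs, Int.cast_abs]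
  have hγq : |(γ : ℝ)| = Real.exp (Real.log c) := by
    rw [Real.exp_log hc0, ← hγc, Nat.cast_natAbs, Int.cast_abs]
  obtain ⟨hK1, hK2⟩ := paramK_bounds (L := L) hb hc
  generalize paramK L b c = K at *
  generalize Real.log b = p at *
  generalize Real.log c = q at *
  obtain ⟨R₂, S₂, R, S, g, hg, hLg, hKL, hR, hS, hR1, hS1, hSK, hR₂, hS₂, hRr, hSr⟩ :=
    exists_params hp hq hL hK1 hK2
  have hp0 : 0 < p := by linarith
  have hq0 : 0 < q := by linarith
  have hLr : (15 : ℝ) ≤ L := by exact_mod_cast hL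
  have hK0 : 1 ≤ K := by
    have : (0 : ℝ) < K := lt_of_le_of_lt (by positivity) hK1
    exact_mod_cast this
  by_cases hdeg : R₂ ≤ v ∨ S₂ ≤ u
  · have hinj := box_injective hu hv huv hdeg
    have hr : 0 < (R : ℝ) - 1 := by
      have : (2 : ℝ) ≤ R := by exact_mod_cast hR1
      linarith
    have hs : 0 ≤ (S : ℝ) - 1 := by
      have : (1 : ℝ) ≤ S := by exact_mod_cast hS1
      linarith
    have hu0 : (0 : ℝ) < u := by exact_mod_cast hu
    have hm : 0 < (((R : ℝ) - 1) * u + ((S : ℝ) - 1) * v) / 2 := by positivity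
    have hodd : Odd u ∨ Odd v := by
      by_contra! hcon
      rw [Nat.not_odd_iff_even, Nat.not_odd_iff_even] at hcon
      have := Nat.dvd_gcd hcon.1.two_dvd hcon.2.two_dvd
      rw [huv.gcd_eq_one] at this
      omega
    have hfund := fund_two_adic K L g R₂ S₂ R S u v β γ p q _ hp0.le hq0.le hβp hγq hβγ
      (by omega) (by omega) hβ hγ hodd hK0 (by omega) hg hLg hKL hR hS (by omega) hS1 hinj hm
      (by ring) hdvd
    refine two_adic_numeric p q L K ((R : ℝ) - 1) ((S : ℝ) - 1) X
      _ hp hq hLr hK1.le hr.le hRr hs hSr hX hm ?_ hLX ?_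
    · have e1 := mul_le_mul_of_nonneg_left huX hr.le
      have e2 := mul_le_mul_of_nonneg_left hvX hs
      linarith
    · simpa only [sub_add_cancel] using hfund
  · push Not at hdeg
    have hne := pow_ne_of_coprime hβγ (by omega : 1 < γ.natAbs) (v := v) hu
    -- here `v p` and `u q` are at most `3 L p q`, so `|β ^ v - γ ^ u|` is less than `4 ^ (K L)`
    have hle := Int.le_of_dvd (abs_pos.2 (sub_ne_zero.2 hne)) ((dvd_abs _ _).2 hdvd)
    have hle' : (4 : ℝ) ^ (K * L) ≤ |(β : ℝ) ^ v - (γ : ℝ) ^ u| := by exact_mod_cast hle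
    have hvR : (v : ℝ) ≤ 3 * L * q := by
      have : (v : ℝ) + 1 ≤ R₂ := by exact_mod_cast hdeg.1
      linarith
    have huS : (u : ℝ) ≤ 3 * L * p := by
      have : (u : ℝ) + 1 ≤ S₂ := by exact_mod_cast hdeg.2
      linarith
    have hvR' := mul_le_mul_of_nonneg_right hvR hp0.le
    have huS' := mul_le_mul_of_nonneg_right huS hq0.le
    have b1 : |(β : ℝ) ^ v| ≤ Real.exp (3 * L * p * q) := by
      rw [abs_pow, hβp, ← Real.exp_nat_mul]
      apply Real.exp_le_exp.2
      linarith
    have b2 : |(γ : ℝ) ^ u| ≤ Real.exp (3 * L * p * q) := by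
      rw [abs_pow, hγq, ← Real.exp_nat_mul]
      apply Real.exp_le_exp.2
      linarith
    have b3 := (abs_sub ((β : ℝ) ^ v) ((γ : ℝ) ^ u))
    have b4 : (4 : ℝ) ^ (K * L) ≤ 2 * Real.exp (3 * L * p * q) := by linarith
    have b5 := Real.log_le_log (by positivity) b4
    rw [Real.log_mul (by norm_num) (by positivity), Real.log_exp, Real.log_pow] at b5
    have h4 : Real.log 4 = 2 * Real.log 2 := by
      rw [show (4 : ℝ) = 2 ^ 2 by norm_num, Real.log_pow]; norm_num
    have h2 := Real.log_two_gt_d9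
    have h2' := Real.log_two_lt_d9
    push_cast at b5
    rw [h4] at b5
    have hpq : 1.098 * 1.098 ≤ p * q := by
      apply mul_le_mul hp hq (by norm_num) (by linarith)
    have hLpq : 15 * (1.098 * 1.098) ≤ L * (p * q) := by
      apply mul_le_mul hLr hpq (by norm_num) (by linarith)
    have e1 : 9 * L * p * q * L ≤ K * L := mul_le_mul_of_nonneg_right hK1.le (by linarith)
    have e2 : L * p * q * 15 ≤ L * p * q * L :=
      mul_le_mul_of_nonneg_left hLr (by positivity)
    have e3 : (K * L : ℝ) * 0.6931 ≤ K * L * Real.log 2 := by gcongr; linarith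
    linarith

/-- Mean value bound: if `exp s` and `exp t` are at distance at least `1` and `s, t ≤ E`, then `s` and
`t` are at distance at least `exp (-E)`. -/
theorem one_le_abs_sub_mul_exp {s t E : ℝ} (hs : s ≤ E) (ht : t ≤ E)
    (h : 1 ≤ |Real.exp s - Real.exp t|) : 1 ≤ |s - t| * Real.exp E := by
  have key : ∀ s t : ℝ, Real.exp s - Real.exp t ≤ |s - t| * Real.exp s := by
    intro s t
    have h1 := Real.add_one_le_exp (t - s)
    have h2 : Real.exp t = Real.exp s * Real.exp (t - s) := by
      rw [← Real.exp_add]; congr 1; ring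
    have h3 := le_abs_self (s - t)
    have h4 := Real.exp_pos s
    rw [h2]
    nlinarith
  have k1 := (key s t).trans (mul_le_mul_of_nonneg_left (Real.exp_le_exp.2 hs) (abs_nonneg _))
  have k2 := (key t s).trans (mul_le_mul_of_nonneg_left (Real.exp_le_exp.2 ht) (abs_nonneg _))
  rw [abs_sub_comm t s] at k2
  refine h.trans (abs_le.2 ⟨by linarith, k1⟩)

/-- Lower bound for the linear form in two logarithms `u log c - v log b`. -/
theorem arch_core {L b c u v : ℕ} {X : ℝ} (hb : 3 ≤ b) (hc : 3 ≤ c)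
    (hbc : Nat.Coprime b c) (hu : 0 < u) (hv : 0 < v) (huv : Nat.Coprime u v) (hX : 1 ≤ X)
    (huX : u ≤ X * Real.log b) (hvX : v ≤ X * Real.log c) (hL : 15 ≤ L)
    (hLX : 1.29 * Real.log X + 2.6 ≤ L) :
    Real.exp (-(2 * (paramK L b c * L : ℕ))) / (paramK L b c * L : ℕ) <
      |u * Real.log c - v * Real.log b| := by
  by_contra! hΛ
  have hp := log_three_le hb
  have hq := log_three_le hc
  have hb0 : (0 : ℝ) < b := by exact_mod_cast (by omega : 0 < b)
  have hc0 : (0 : ℝ) < c := by exact_mod_cast (by omega : 0 < c)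
  have hβp : (b : ℝ) = Real.exp (Real.log b) := (Real.exp_log hb0).symm
  have hγq : (c : ℝ) = Real.exp (Real.log c) := (Real.exp_log hc0).symm
  obtain ⟨hK1, hK2⟩ := paramK_bounds (L := L) hb hc
  generalize paramK L b c = K at *
  generalize Real.log b = p at *
  generalize Real.log c = q at *
  obtain ⟨R₂, S₂, R, S, g, hg, hLg, hKL, hR, hS, hR1, hS1, hSK, hR₂, hS₂, hRr, hSr⟩ :=
    exists_params hp hq hL hK1 hK2
  have hp0 : 0 < p := by linarith
  have hq0 : 0 < q := by linarith
  have hLr : (15 : ℝ) ≤ L := by exact_mod_cast hL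
  have hK0 : 1 ≤ K := by
    have : (0 : ℝ) < K := lt_of_le_of_lt (by positivity) hK1
    exact_mod_cast this
  by_cases hdeg : R₂ ≤ v ∨ S₂ ≤ u
  · have hinj := box_injective hu hv huv hdeg
    have hr : 0 < (R : ℝ) - 1 := by
      have : (2 : ℝ) ≤ R := by exact_mod_cast hR1
      linarith
    have hs : 0 ≤ (S : ℝ) - 1 := by
      have : (1 : ℝ) ≤ S := by exact_mod_cast hS1
      linarith
    have hu0 : (0 : ℝ) < u := by exact_mod_cast hu
    have hm : 0 < (((R : ℝ) - 1) * u + ((S : ℝ) - 1) * v) / 2 := by positivity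
    have hfund := fund_arch K L g R₂ S₂ R S u v b c p q _ hp0.le hq0.le
      hβp hγq hbc (by omega) (by omega) hu hSK hK0 (by omega) hg hLg hKL hR hS hR1 hS1 hinj hm
      (by ring) hΛ
    refine arch_numeric p q L K ((R : ℝ) - 1) ((S : ℝ) - 1) X
      _ hp hq hLr hK1.le hr.le hRr hs hSr hX hm ?_ hLX ?_
    · have e1 := mul_le_mul_of_nonneg_left huX hr.le
      have e2 := mul_le_mul_of_nonneg_left hvX hs
      linarith
    · simpa only [sub_add_cancel] using hfund
  · push Not at hdeg
    have hne : (b : ℤ) ^ v ≠ (c : ℤ) ^ u := pow_ne_of_coprime (Nat.isCoprime_iff_coprime.2 hbc)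
      (by simpa using (by omega : 1 < c)) hu
    have hle := Int.one_le_abs (sub_ne_zero.2 hne)
    have hle' : (1 : ℝ) ≤ |(b : ℝ) ^ v - (c : ℝ) ^ u| := by exact_mod_cast hle
    have hvR : (v : ℝ) ≤ 3 * L * q := by
      have : (v : ℝ) + 1 ≤ R₂ := by exact_mod_cast hdeg.1
      linarith
    have huS : (u : ℝ) ≤ 3 * L * p := by
      have : (u : ℝ) + 1 ≤ S₂ := by exact_mod_cast hdeg.2
      linarith
    have hvR' := mul_le_mul_of_nonneg_right hvR hp0.le
    have huS' := mul_le_mul_of_nonneg_right huS hq0.le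
    rw [hβp, hγq, ← Real.exp_nat_mul, ← Real.exp_nat_mul] at hle'
    have h1 := one_le_abs_sub_mul_exp (E := 3 * L * p * q) (by linarith) (by linarith) hle'
    rw [abs_sub_comm] at h1
    have hN : (1 : ℝ) ≤ (K * L : ℕ) := by
      exact_mod_cast Nat.mul_pos hK0 (by omega : 0 < L)
    have h2 : Real.exp (-(2 * (K * L : ℕ))) / (K * L : ℕ) ≤ Real.exp (-(2 * (K * L : ℕ))) :=
      div_le_self (Real.exp_pos _).le hN
    have h3 := h1.trans (mul_le_mul_of_nonneg_right (hΛ.trans h2) (Real.exp_pos _).le)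
    rw [← Real.exp_add, Real.one_le_exp_iff] at h3
    push_cast at h3
    have e1 : 9 * L * p * q * L ≤ K * L := mul_le_mul_of_nonneg_right hK1.le (by linarith)
    have e2 : L * p * q * 15 ≤ L * p * q * L :=
      mul_le_mul_of_nonneg_left hLr (by positivity)
    have e3 : 0 < L * p * q := by positivity
    linarith

theorem paramK_mul_bounds {L b c : ℕ} (hb : 3 ≤ b) (hc : 3 ≤ c) :
    9 * (L : ℝ) ^ 2 * (Real.log b * Real.log c) ≤ (paramK L b c * L : ℕ) ∧
    ((paramK L b c * L : ℕ) : ℝ) ≤ 9 * (L : ℝ) ^ 2 * (Real.log b * Real.log c) + L := by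
  obtain ⟨h1, h2⟩ := paramK_bounds (L := L) hb hc
  have hL : (0 : ℝ) ≤ L := Nat.cast_nonneg L
  have h3 := mul_le_mul_of_nonneg_right h1.le hL
  have h4 := mul_le_mul_of_nonneg_right h2 hL
  push_cast
  constructor <;> linarith

/-! ### From the exponential equation to linear forms -/

theorem four_dvd_pow_sub_one {X : ℤ} (h : 4 ∣ X - 1) (n : ℕ) : 4 ∣ X ^ n - 1 := by
  have := sub_dvd_pow_sub_pow X 1 n
  rw [one_pow] at this
  exact h.trans this

/-- Lifting the exponent at the prime `2`: removing the common exponent `d` costs at most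
`log₂ d` in the exponent of `2`. -/
theorem two_pow_dvd_of_pow_sub_pow {X W : ℤ} {d M : ℕ} (hX : 4 ∣ X - 1) (hW : 4 ∣ W - 1)
    (hd : 0 < d) (h : (2 : ℤ) ^ (M + Nat.log 2 d) ∣ X ^ d - W ^ d) : (2 : ℤ) ^ M ∣ X - W := by
  have h1 : (4 : ℤ) ∣ X - W := by omega
  have h2 : ¬ (2 : ℤ) ∣ X := by omega
  have h3 := Int.two_pow_sub_pow' d h1 h2
  rw [pow_dvd_iff_le_emultiplicity, h3] at h
  have hfin : FiniteMultiplicity 2 d := Nat.finiteMultiplicity_iff.2 ⟨by norm_num, hd⟩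
  have h4 : emultiplicity (2 : ℤ) (d : ℤ) = (multiplicity 2 d : ℕ) := by
    rw [← hfin.emultiplicity_eq_multiplicity]
    exact_mod_cast Int.natCast_emultiplicity 2 d
  have h5 : multiplicity 2 d ≤ Nat.log 2 d :=
    Nat.le_log_of_pow_le (by norm_num) (Nat.le_of_dvd hd (pow_multiplicity_dvd 2 d))
  rw [h4] at h
  rw [pow_dvd_iff_le_emultiplicity]
  have h6 : ((M : ℕ∞) + multiplicity 2 d) ≤ emultiplicity 2 (X - W) + multiplicity 2 d := by
    refine le_trans ?_ h
    exact_mod_cast Nat.add_le_add_left h5 M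
  exact (ENat.add_le_add_iff_right (ENat.natCast_ne_top _)).1 h6

/-- An odd integer is, up to sign, congruent to `1` modulo `4`. -/
theorem exists_signed {b : ℕ} (hb : Odd b) : ∃ ε β : ℤ, (ε = 1 ∨ ε = -1) ∧ (b : ℤ) = ε * β ∧
    β.natAbs = b ∧ 4 ∣ β - 1 := by
  have : b % 4 = 1 ∨ b % 4 = 3 := by
    have := Nat.odd_iff.1 hb
    omega
  rcases this with h | h
  · exact ⟨1, b, Or.inl rfl, by ring, by simp, by omega⟩
  · exact ⟨-1, -b, Or.inr rfl, by ring, by simp, by omega⟩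

theorem exists_gcd_quotients {y z : ℕ} (hy : 0 < y) (hz : 0 < z) :
    ∃ u v : ℕ, 0 < Nat.gcd y z ∧ 0 < u ∧ 0 < v ∧ y = Nat.gcd y z * v ∧ z = Nat.gcd y z * u ∧
      Nat.Coprime u v ∧ u ≤ z ∧ v ≤ y := by
  have hd : 0 < Nat.gcd y z := Nat.gcd_pos_of_pos_left _ hy
  obtain ⟨v, hv⟩ := Nat.gcd_dvd_left y z
  obtain ⟨u, hu⟩ := Nat.gcd_dvd_right y z
  have huv : Nat.Coprime u v := by
    have := Nat.gcd_mul_left (Nat.gcd y z) v u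
    rw [← hv, ← hu] at this
    have h1 : Nat.gcd v u = 1 := by
      have h2 : Nat.gcd y z * Nat.gcd v u = Nat.gcd y z * 1 := by omega
      exact Nat.eq_of_mul_eq_mul_left hd h2
    exact Nat.Coprime.symm h1
  have hu0 : 0 < u := by
    rcases Nat.eq_zero_or_pos u with h0 | h0
    · rw [h0] at hu; omega
    · exact h0
  have hv0 : 0 < v := by
    rcases Nat.eq_zero_or_pos v with h0 | h0
    · rw [h0] at hv; omega
    · exact h0
  have huz : u ≤ z := Nat.le_of_dvd hz ⟨_, by rw [mul_comm]; exact hu⟩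
  have hvy : v ≤ y := Nat.le_of_dvd hy ⟨_, by rw [mul_comm]; exact hv⟩
  exact ⟨u, v, hd, hu0, hv0, hv, hu, huv, huz, hvy⟩

/-- The exponent of `2` in `c ^ z - s b ^ y`, with `s = ±1`. -/
theorem two_adic_exponent {b c y z n L : ℕ} {s : ℤ} {X : ℝ} (hb : 3 ≤ b) (hc : 3 ≤ c)
    (hbo : Odd b) (hco : Odd c) (hbc : Nat.Coprime b c) (hy : 0 < y) (hz : 0 < z)
    (hs : s = 1 ∨ s = -1) (hX : 1 ≤ X)
    (hzX : z ≤ X * Real.log b) (hyX : y ≤ X * Real.log c) (hL : 15 ≤ L)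
    (hLX : 1.29 * Real.log X + 2.6 ≤ L) (h : (2 : ℤ) ^ n ∣ (c : ℤ) ^ z - s * (b : ℤ) ^ y) :
    n < 2 * (paramK L b c * L) + Nat.log 2 (Nat.gcd y z) := by
  have hN : 1 ≤ paramK L b c * L := Nat.mul_pos (Nat.succ_pos _) (by omega)
  by_contra! hn
  have hn2 : 2 ≤ n := by omega
  obtain ⟨ε, β, hε, hβe, hβb, hβ⟩ := exists_signed hbo
  obtain ⟨η, γ, hη, hγe, hγc, hγ⟩ := exists_signed hco
  obtain ⟨u, v, hd, hu0, hv0, hv, hu, huv, huz, hvy⟩ := exists_gcd_quotients hy hz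
  generalize hdd : Nat.gcd y z = d at *
  have hpm : ∀ (e : ℤ) (k : ℕ), (e = 1 ∨ e = -1) → (e ^ k = 1 ∨ e ^ k = -1) := by
    rintro e k (rfl | rfl)
    · left; simp
    · exact neg_one_pow_eq_or ℤ k
  rw [hβe, hγe, mul_pow, mul_pow] at h
  have h4b := four_dvd_pow_sub_one hβ y
  have h4c := four_dvd_pow_sub_one hγ z
  have h4 : (4 : ℤ) ∣ η ^ z * γ ^ z - s * (ε ^ y * β ^ y) :=
    (pow_dvd_pow (2 : ℤ) hn2).trans h
  -- modulo `4` the powers of `β` and `γ` are `1`, which decides the relative sign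
  have hdvd : (2 : ℤ) ^ n ∣ β ^ y - γ ^ z := by
    rcases hpm η z hη with e1 | e1 <;> rcases hpm ε y hε with e2 | e2 <;>
      rcases hs with rfl | rfl <;> rw [e1, e2] at h h4 <;> first
      | (exfalso; omega)
      | (obtain ⟨k, hk⟩ := h; exact ⟨k, by linear_combination hk⟩)
      | (obtain ⟨k, hk⟩ := h; exact ⟨-k, by linear_combination -hk⟩)
  have h5 : (2 : ℤ) ^ (2 * (paramK L b c * L) + Nat.log 2 d) ∣ (β ^ v) ^ d - (γ ^ u) ^ d := by
    rw [← pow_mul, ← pow_mul, mul_comm v, mul_comm u, ← hv, ← hu]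
    exact (pow_dvd_pow 2 hn).trans hdvd
  have h6 := two_pow_dvd_of_pow_sub_pow (four_dvd_pow_sub_one hβ v) (four_dvd_pow_sub_one hγ u)
    hd h5
  rw [pow_mul] at h6
  refine two_adic_core hb hc hβb hγc ?_ hβ hγ hu0 hv0 huv hX ?_ ?_ hL hLX h6
  · rw [Int.isCoprime_iff_gcd_eq_one, Int.gcd_eq_natAbs, hβb, hγc]; exact hbc
  · exact le_trans (by exact_mod_cast huz) hzX
  · exact le_trans (by exact_mod_cast hvy) hyX

/-- Real form of the bound for the exponent of `2`. -/
theorem two_adic_bound {b c y z n L : ℕ} {s : ℤ} {X A : ℝ} (hb : 3 ≤ b) (hc : 3 ≤ c)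
    (hbo : Odd b) (hco : Odd c) (hbc : Nat.Coprime b c) (hy : 0 < y) (hz : 0 < z)
    (hs : s = 1 ∨ s = -1) (hX : 1 ≤ X) (hbA : Real.log b ≤ A) (hAX : 6500 * A ^ 2 ≤ X)
    (hzX : z ≤ X * Real.log b) (hyX : y ≤ X * Real.log c) (hL : 15 ≤ L)
    (hLX : 1.29 * Real.log X + 2.6 ≤ L) (h : (2 : ℤ) ^ n ∣ (c : ℤ) ^ z - s * (b : ℤ) ^ y) :
    (n : ℝ) ≤ 18.25 * L ^ 2 * (Real.log b * Real.log c) := by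
  have h1 := two_adic_exponent hb hc hbo hco hbc hy hz hs hX hzX hyX hL hLX h
  have h1' : (n : ℝ) ≤ 2 * (paramK L b c * L : ℕ) + (Nat.log 2 (Nat.gcd y z) : ℕ) := by
    exact_mod_cast h1.le
  obtain ⟨_, h2⟩ := paramK_mul_bounds (L := L) hb hc
  have hp := log_three_le hb
  have hq := log_three_le hc
  have hLr : (15 : ℝ) ≤ L := by exact_mod_cast hL
  have hd : 0 < Nat.gcd y z := Nat.gcd_pos_of_pos_left _ hy
  have hA : 1.098 ≤ A := hp.trans hbA
  have hlog : (Nat.log 2 (Nat.gcd y z) : ℝ) * Real.log 2 ≤ 1.5 * Real.log X := by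
    have e1 : ((2 : ℝ) ^ Nat.log 2 (Nat.gcd y z)) ≤ z := by
      exact_mod_cast (Nat.pow_log_le_self 2 hd.ne').trans
        (Nat.le_of_dvd hz (Nat.gcd_dvd_right y z))
    have e2 : A ^ 2 ≤ X := by nlinarith
    have e3 : (2 : ℝ) ^ Nat.log 2 (Nat.gcd y z) ≤ X * A :=
      e1.trans (hzX.trans (mul_le_mul_of_nonneg_left hbA (by linarith)))
    have e4 := Real.log_le_log (by positivity) e3
    have e5 := Real.log_le_log (by positivity) e2
    rw [Real.log_pow, Real.log_mul (by positivity) (by positivity)] at e4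
    rw [Real.log_pow] at e5
    push_cast at e5
    linarith
  have h2' := Real.log_two_gt_d9
  have h3 : (Nat.log 2 (Nat.gcd y z) : ℝ) ≤ 1.7 * L := by
    have e1 : (Nat.log 2 (Nat.gcd y z) : ℝ) * 0.693 ≤
        Nat.log 2 (Nat.gcd y z) * Real.log 2 := by gcongr; linarith
    linarith
  have hpq : 1.098 * 1.098 ≤ Real.log b * Real.log c :=
    mul_le_mul hp hq (by norm_num) (by linarith)
  have h4 : (15 * L : ℝ) * (1.098 * 1.098) ≤ L ^ 2 * (Real.log b * Real.log c) :=
    mul_le_mul (by nlinarith) hpq (by norm_num) (by positivity)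
  linarith

/-- Upper bound for `y log b` coming from the lower bound for `z log c - y log b`. -/
theorem arch_bound {a b c x y z L : ℕ} {X : ℝ} (ha : 0 < a) (hb : 3 ≤ b) (hc : 3 ≤ c)
    (hbc : Nat.Coprime b c) (hy : 0 < y) (hz : 0 < z) (hX : 1 ≤ X)
    (hzX : z ≤ X * Real.log b) (hyX : y ≤ X * Real.log c) (hL : 15 ≤ L)
    (hLX : 1.29 * Real.log X + 2.6 ≤ L) (heq : a ^ x + b ^ y = c ^ z) :
    y * Real.log b ≤ x * Real.log a + 18.2 * L ^ 2 * (Real.log b * Real.log c) := by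
  have hN : 1 ≤ paramK L b c * L := Nat.mul_pos (Nat.succ_pos _) (by omega)
  obtain ⟨u, v, hd, hu0, hv0, hv, hu, huv, huz, hvy⟩ := exists_gcd_quotients hy hz
  have hcore := arch_core hb hc hbc hu0 hv0 huv hX (le_trans (by exact_mod_cast huz) hzX)
    (le_trans (by exact_mod_cast hvy) hyX) hL hLX
  have hp := log_three_le hb
  have hq := log_three_le hc
  have hLr : (15 : ℝ) ≤ L := by exact_mod_cast hL
  obtain ⟨_, h2⟩ := paramK_mul_bounds (L := L) hb hc
  obtain ⟨hK1, _⟩ := paramK_bounds (L := L) hb hc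
  obtain ⟨_, _, hK3, _, hKlog⟩ := size_bounds _ _ (L : ℝ) _ 0 0 hp hq hLr hK1.le le_rfl
    (by positivity) le_rfl (by positivity)
  have ha0 : (0 : ℝ) < a := by exact_mod_cast ha
  have hb0 : (0 : ℝ) < b := by exact_mod_cast (by omega : 0 < b)
  have hc0 : (0 : ℝ) < c := by exact_mod_cast (by omega : 0 < c)
  have heq' : (a : ℝ) ^ x + (b : ℝ) ^ y = (c : ℝ) ^ z := by exact_mod_cast heq
  have hΛ0 : 0 < z * Real.log c - y * Real.log b := by
    have : (b : ℝ) ^ y < (c : ℝ) ^ z := by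
      have : 0 < (a : ℝ) ^ x := by positivity
      linarith
    have := Real.log_lt_log (by positivity) this
    rw [Real.log_pow, Real.log_pow] at this
    linarith
  have hΛ1 : z * Real.log c - y * Real.log b ≤ (a : ℝ) ^ x / (b : ℝ) ^ y := by
    have e1 : (c : ℝ) ^ z / (b : ℝ) ^ y = (a : ℝ) ^ x / (b : ℝ) ^ y + 1 := by
      rw [← heq']; field_simp
    have e2 := Real.log_le_sub_one_of_pos (show 0 < (c : ℝ) ^ z / (b : ℝ) ^ y by positivity)
    rw [Real.log_div (by positivity) (by positivity), Real.log_pow, Real.log_pow, e1] at e2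
    linarith
  have hle : |(u : ℝ) * Real.log c - v * Real.log b| ≤ z * Real.log c - y * Real.log b := by
    have e1 : z * Real.log c - y * Real.log b =
        (Nat.gcd y z : ℝ) * (u * Real.log c - v * Real.log b) := by
      have hv' : (y : ℝ) = (Nat.gcd y z : ℝ) * v := by exact_mod_cast hv
      have hu' : (z : ℝ) = (Nat.gcd y z : ℝ) * u := by exact_mod_cast hu
      calc _ = (Nat.gcd y z : ℝ) * u * Real.log c - (Nat.gcd y z : ℝ) * v * Real.log b := by
            rw [← hv', ← hu']
        _ = _ := by ring
    have hd1 : (1 : ℝ) ≤ (Nat.gcd y z : ℝ) := by exact_mod_cast hd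
    rw [e1] at hΛ0 ⊢
    have := pos_of_mul_pos_right hΛ0 (by linarith)
    rw [abs_of_pos this]
    nlinarith
  have hfin := hcore.trans_le (hle.trans hΛ1)
  have hN0 : (0 : ℝ) < (paramK L b c * L : ℕ) := by exact_mod_cast hN
  have hlog := Real.log_lt_log (div_pos (Real.exp_pos _) hN0) hfin
  rw [Real.log_div (by positivity) hN0.ne', Real.log_exp, Real.log_div (by positivity)
    (by positivity), Real.log_pow, Real.log_pow] at hlog
  push_cast at hlog h2
  have hpq : 1.098 * 1.098 ≤ Real.log b * Real.log c :=
    mul_le_mul hp hq (by norm_num) (by linarith)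
  have h4 : (15 * L : ℝ) * (1.098 * 1.098) ≤ L ^ 2 * (Real.log b * Real.log c) :=
    mul_le_mul (by nlinarith) hpq (by norm_num) (by positivity)
  have h5 : (paramK L b c : ℝ) * 15 ≤ paramK L b c * L :=
    mul_le_mul_of_nonneg_left hLr (by positivity)
  linarith

/-! ### Conclusion -/

theorem log_6500_le : Real.log 6500 ≤ 8.8 := by
  rw [Real.log_le_iff_le_exp (by norm_num)]
  have : Real.exp 8.8 = Real.exp 1 ^ 8 * Real.exp 0.4 ^ 2 := by
    rw [← Real.exp_nat_mul, ← Real.exp_nat_mul, ← Real.exp_add]; norm_num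
  rw [this]
  have h3 := Real.quadratic_le_exp_of_nonneg (show (0 : ℝ) ≤ 0.4 by norm_num)
  calc (6500 : ℝ) ≤ 2.7182818283 ^ 8 * (1 + 0.4 + 0.4 ^ 2 / 2) ^ 2 := by norm_num
    _ ≤ _ := by
      gcongr
      exact Real.exp_one_gt_d9.le

/-- The inequality that closes the circular estimate: if `L` is within the rounding error of
`1.29 log X + 2.6` with `X = 6500 s²`, then `18.5 L² (1 + s) < 6500 s²`. -/
theorem closing_inequality {s L : ℝ} (hs : 1.5 ≤ s) (hL0 : 0 ≤ L)
    (hL : L ≤ 1.29 * Real.log (6500 * s ^ 2) + 3.6) : 18.5 * L ^ 2 * (1 + s) < 6500 * s ^ 2 := by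
  have hs0 : 0 < s := by linarith
  -- in terms of `t = √s`, the logarithm is bounded by its tangent line at `exp 0.25`
  obtain ⟨t, ht0, rfl⟩ : ∃ t : ℝ, 0 < t ∧ s = t ^ 2 :=
    ⟨Real.sqrt s, Real.sqrt_pos.2 hs0, (Real.sq_sqrt hs0.le).symm⟩
  have ht : 1.2247 ≤ t := by nlinarith
  have hlog : Real.log t ≤ 0.7805 * t - 0.75 := by
    have e1 := Real.log_le_sub_one_of_pos (show 0 < t / Real.exp 0.25 by positivity)
    rw [Real.log_div (by positivity) (by positivity), Real.log_exp] at e1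
    have e2 := Real.quadratic_le_exp_of_nonneg (show (0 : ℝ) ≤ 0.25 by norm_num)
    have e3 : t / Real.exp 0.25 ≤ t / 1.28125 := by
      gcongr
      norm_num at e2 ⊢
      linarith
    have e4 : t / 1.28125 ≤ 0.7805 * t := by
      rw [div_le_iff₀ (by norm_num)]; nlinarith
    linarith
  have h6500 := log_6500_le
  rw [Real.log_mul (by norm_num) (by positivity), Real.log_pow, Real.log_pow] at hL
  push_cast at hL
  have hLt : L ≤ 13.1 * t := by linarith
  have hL2 : L ^ 2 ≤ (13.1 * t) ^ 2 := by gcongr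
  have h1 : 1 + t ^ 2 ≤ 1.6668 * t ^ 2 := by nlinarith
  have h2 : 18.5 * L ^ 2 * (1 + t ^ 2) ≤ 18.5 * (13.1 * t) ^ 2 * (1.6668 * t ^ 2) := by gcongr
  have h3 : 0 < t ^ 4 := by positivity
  nlinarith

/-- The choice of `X` and `L` given the upper bound `A` for the heights and the quantity `X₀`
to be estimated. -/
theorem exists_X_L {A X₀ : ℝ} (hA : 1.5 ≤ A) : ∃ (X : ℝ) (L : ℕ), 1 ≤ X ∧ 15 ≤ L ∧ X₀ ≤ X ∧
    6500 * A ^ 2 ≤ X ∧ 1.29 * Real.log X + 2.6 ≤ L ∧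
    (X₀ ≤ 18.5 * L ^ 2 * (1 + A) → X₀ < 6500 * A ^ 2 ∧ 18.5 * (L : ℝ) ^ 2 < 6500 * A) := by
  have hX1 : 6500 * A ^ 2 ≤ max X₀ (6500 * A ^ 2) := le_max_right _ _
  have hX9 : 9 ≤ Real.log (max X₀ (6500 * A ^ 2)) := by
    rw [Real.le_log_iff_exp_le (lt_of_lt_of_le (by positivity) hX1)]
    refine le_trans ?_ hX1
    have : Real.exp 9 = Real.exp 1 ^ 9 := by rw [← Real.exp_nat_mul]; norm_num
    rw [this]
    calc Real.exp 1 ^ 9 ≤ 2.7182818286 ^ 9 := by gcongr; exact Real.exp_one_lt_d9.le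
      _ ≤ 6500 * 1.5 ^ 2 := by norm_num
      _ ≤ _ := by gcongr
  have hceil := Nat.le_ceil (1.29 * Real.log (max X₀ (6500 * A ^ 2)) + 2.6)
  have hceil' := Nat.ceil_lt_add_one
    (show 0 ≤ 1.29 * Real.log (max X₀ (6500 * A ^ 2)) + 2.6 by linarith)
  refine ⟨max X₀ (6500 * A ^ 2), ⌈1.29 * Real.log (max X₀ (6500 * A ^ 2)) + 2.6⌉₊,
    by nlinarith, ?_, le_max_left _ _, hX1, hceil, ?_⟩
  · have : (14 : ℝ) < ⌈1.29 * Real.log (max X₀ (6500 * A ^ 2)) + 2.6⌉₊ := by linarith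
    exact_mod_cast this
  · intro h
    generalize ⌈1.29 * Real.log (max X₀ (6500 * A ^ 2)) + 2.6⌉₊ = L at *
    have hL0 : (0 : ℝ) ≤ L := Nat.cast_nonneg L
    have hlt : X₀ < 6500 * A ^ 2 := by
      by_contra! hge
      rw [max_eq_left hge] at hceil'
      obtain ⟨s, hs0, hs⟩ : ∃ s : ℝ, 0 ≤ s ∧ X₀ = 6500 * s ^ 2 :=
        ⟨Real.sqrt (X₀ / 6500), Real.sqrt_nonneg _, by
          rw [Real.sq_sqrt (by nlinarith)]; ring⟩
      have hAs : A ≤ s := by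
        refine (pow_le_pow_iff_left₀ (by linarith) hs0 two_ne_zero).1 ?_
        linarith
      have := closing_inequality (hA.trans hAs) hL0 (by rw [← hs]; linarith)
      have h2 : 18.5 * (L : ℝ) ^ 2 * (1 + A) ≤ 18.5 * (L : ℝ) ^ 2 * (1 + s) := by gcongr
      linarith
    refine ⟨hlt, ?_⟩
    rw [max_eq_right hlt.le] at hceil'
    have := closing_inequality hA hL0 (by linarith)
    by_contra! hge
    have h3 : 6500 * A * A ≤ 18.5 * (L : ℝ) ^ 2 * A := by gcongr
    nlinarith

/-- The case of an even base on the left-hand side. -/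
theorem even_left {a b c x y z : ℕ} {A : ℝ} (ha : 0 < a) (hae : Even a) (hb : 3 ≤ b) (hc : 3 ≤ c)
    (hbo : Odd b) (hco : Odd c) (hbc : Nat.Coprime b c) (hy : 0 < y) (hz : 0 < z)
    (hA : 1.5 ≤ A) (haA : Real.log a ≤ A) (hbA : Real.log b ≤ A) (hcA : Real.log c ≤ A)
    (heq : a ^ x + b ^ y = c ^ z) :
    x < 6500 * A ^ 3 ∧ y < 6500 * A ^ 3 ∧ z < 6500 * A ^ 3 := by
  have hp := log_three_le hb
  have hq := log_three_le hc
  have hp0 : 0 < Real.log b := by linarith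
  have hq0 : 0 < Real.log c := by linarith
  have ha0 : (0 : ℝ) < a := by exact_mod_cast ha
  have hb0 : (0 : ℝ) < b := by exact_mod_cast (by omega : 0 < b)
  have hc0 : (0 : ℝ) < c := by exact_mod_cast (by omega : 0 < c)
  obtain ⟨X, L, hX, hL, hX₀, hAX, hLX, hclose⟩ :=
    exists_X_L (X₀ := max (y / Real.log c) (z / Real.log b)) hA
  have hyX : y ≤ X * Real.log c := (div_le_iff₀ hq0).1 ((le_max_left _ _).trans hX₀)
  have hzX : z ≤ X * Real.log b := (div_le_iff₀ hp0).1 ((le_max_right _ _).trans hX₀)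
  have hdvd : (2 : ℤ) ^ x ∣ (c : ℤ) ^ z - 1 * (b : ℤ) ^ y := by
    have e1 : (a : ℤ) ^ x + (b : ℤ) ^ y = (c : ℤ) ^ z := by exact_mod_cast heq
    have e2 : (c : ℤ) ^ z - 1 * (b : ℤ) ^ y = (a : ℤ) ^ x := by linarith
    rw [e2]
    exact pow_dvd_pow_of_dvd (by exact_mod_cast hae.two_dvd) x
  have hx1 := two_adic_bound hb hc hbo hco hbc hy hz (Or.inl rfl) hX hbA hAX hzX hyX hL hLX hdvd
  have hy1 := arch_bound ha hb hc hbc hy hz hX hzX hyX hL hLX heq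
  have hLr : (15 : ℝ) ≤ L := by exact_mod_cast hL
  have hL2 : (225 : ℝ) ≤ L ^ 2 := by nlinarith
  have hpq0 : 0 < Real.log b * Real.log c := by positivity
  have hpq1 : 1.098 * 1.098 ≤ Real.log b * Real.log c :=
    mul_le_mul hp hq (by norm_num) hp0.le
  have hV : 225 * (1.098 * 1.098) ≤ (L : ℝ) ^ 2 * (Real.log b * Real.log c) :=
    mul_le_mul hL2 hpq1 (by norm_num) (by positivity)
  have hxa : x * Real.log a ≤ 18.25 * L ^ 2 * (Real.log b * Real.log c) * A := by
    calc x * Real.log a ≤ x * A := mul_le_mul_of_nonneg_left haA (Nat.cast_nonneg x)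
      _ ≤ _ := mul_le_mul_of_nonneg_right hx1 (by linarith)
  have hVA : (L : ℝ) ^ 2 * (Real.log b * Real.log c) * 1.5 ≤
      L ^ 2 * (Real.log b * Real.log c) * A := mul_le_mul_of_nonneg_left hA (by positivity)
  have hy2 : y * Real.log b ≤ 18.25 * L ^ 2 * (Real.log b * Real.log c) * (1 + A) := by linarith
  -- `c ^ z` is at most twice the larger of `a ^ x` and `b ^ y`; `log 2` is absorbed by `18.5`
  have hz2 : z * Real.log c ≤ 18.5 * L ^ 2 * (Real.log b * Real.log c) * (1 + A) := by
    have e1 : (c : ℝ) ^ z = (a : ℝ) ^ x + (b : ℝ) ^ y := by exact_mod_cast heq.symm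
    have e2 : (a : ℝ) ^ x ≤ Real.exp (18.25 * L ^ 2 * (Real.log b * Real.log c) * (1 + A)) := by
      rw [← Real.log_le_iff_le_exp (by positivity), Real.log_pow]
      linarith
    have e3 : (b : ℝ) ^ y ≤ Real.exp (18.25 * L ^ 2 * (Real.log b * Real.log c) * (1 + A)) := by
      rw [← Real.log_le_iff_le_exp (by positivity), Real.log_pow]
      exact hy2
    have e4 : (c : ℝ) ^ z ≤
        2 * Real.exp (18.25 * L ^ 2 * (Real.log b * Real.log c) * (1 + A)) := by linarith
    have e5 := Real.log_le_log (by positivity) e4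
    rw [Real.log_pow, Real.log_mul (by norm_num) (by positivity), Real.log_exp] at e5
    have := Real.log_two_lt_d9
    linarith
  obtain ⟨hX3, hL3⟩ := hclose (by
    apply max_le
    · rw [div_le_iff₀ hq0]
      apply le_of_mul_le_mul_right _ hp0
      linarith
    · rw [div_le_iff₀ hp0]
      apply le_of_mul_le_mul_right _ hq0
      linarith)
  have hy3 := (div_lt_iff₀ hq0).1 ((le_max_left _ _).trans_lt hX3)
  have hz3 := (div_lt_iff₀ hp0).1 ((le_max_right _ _).trans_lt hX3)
  have hA0 : 0 < A := by linarith
  refine ⟨?_, ?_, ?_⟩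
  · have e1 : Real.log b * Real.log c ≤ A * A := mul_le_mul hbA hcA hq0.le hA0.le
    calc (x : ℝ) ≤ 18.25 * L ^ 2 * (Real.log b * Real.log c) := hx1
      _ ≤ 18.5 * L ^ 2 * (A * A) := by gcongr; norm_num
      _ < 6500 * A * (A * A) := by gcongr
      _ = _ := by ring
  · calc (y : ℝ) < 6500 * A ^ 2 * Real.log c := hy3
      _ ≤ 6500 * A ^ 2 * A := by gcongr
      _ = _ := by ring
  · calc (z : ℝ) < 6500 * A ^ 2 * Real.log b := hz3
      _ ≤ 6500 * A ^ 2 * A := by gcongr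
      _ = _ := by ring

/-- The case of an even base on the right-hand side. -/
theorem even_right {a b c x y z : ℕ} {A : ℝ} (hc : 0 < c) (hce : Even c) (ha : 3 ≤ a) (hb : 3 ≤ b)
    (hao : Odd a) (hbo : Odd b) (hab : Nat.Coprime a b) (hx : 0 < x) (hy : 0 < y)
    (hA : 1.5 ≤ A) (haA : Real.log a ≤ A) (hbA : Real.log b ≤ A) (hcA : Real.log c ≤ A)
    (heq : a ^ x + b ^ y = c ^ z) :
    x < 6500 * A ^ 3 ∧ y < 6500 * A ^ 3 ∧ z < 6500 * A ^ 3 := by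
  have hp := log_three_le ha
  have hq := log_three_le hb
  have hp0 : 0 < Real.log a := by linarith
  have hq0 : 0 < Real.log b := by linarith
  have ha0 : (0 : ℝ) < a := by exact_mod_cast (by omega : 0 < a)
  have hb0 : (0 : ℝ) < b := by exact_mod_cast (by omega : 0 < b)
  have hc0 : (0 : ℝ) < c := by exact_mod_cast hc
  have hA0 : 0 < A := by linarith
  obtain ⟨X, L, hX, hL, hX₀, hAX, hLX, hclose⟩ :=
    exists_X_L (X₀ := max (x / Real.log b) (y / Real.log a)) hA
  have hxX : x ≤ X * Real.log b := (div_le_iff₀ hq0).1 ((le_max_left _ _).trans hX₀)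
  have hyX : y ≤ X * Real.log a := (div_le_iff₀ hp0).1 ((le_max_right _ _).trans hX₀)
  have heq' : (a : ℝ) ^ x + (b : ℝ) ^ y = (c : ℝ) ^ z := by exact_mod_cast heq
  have hdvd : (2 : ℤ) ^ z ∣ (b : ℤ) ^ y - (-1) * (a : ℤ) ^ x := by
    have e1 : (a : ℤ) ^ x + (b : ℤ) ^ y = (c : ℤ) ^ z := by exact_mod_cast heq
    have e2 : (b : ℤ) ^ y - (-1) * (a : ℤ) ^ x = (c : ℤ) ^ z := by linarith
    rw [e2]
    exact pow_dvd_pow_of_dvd (by exact_mod_cast hce.two_dvd) z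
  have hz1 := two_adic_bound ha hb hao hbo hab hx hy (Or.inr rfl) hX haA hAX hyX hxX hL hLX hdvd
  have hzc : z * Real.log c ≤ 18.25 * L ^ 2 * (Real.log a * Real.log b) * A := by
    calc z * Real.log c ≤ z * A := mul_le_mul_of_nonneg_left hcA (Nat.cast_nonneg z)
      _ ≤ _ := mul_le_mul_of_nonneg_right hz1 hA0.le
  have hV : 0 < (L : ℝ) ^ 2 * (Real.log a * Real.log b) := by
    have : (0 : ℝ) < L := by exact_mod_cast (by omega : 0 < L)
    positivity
  have hVA : 0 < (L : ℝ) ^ 2 * (Real.log a * Real.log b) * A := by positivity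
  have hx2 : x * Real.log a ≤ z * Real.log c := by
    have : (a : ℝ) ^ x ≤ (c : ℝ) ^ z := by
      have : 0 < (b : ℝ) ^ y := by positivity
      linarith
    have := Real.log_le_log (by positivity) this
    rwa [Real.log_pow, Real.log_pow] at this
  have hy2 : y * Real.log b ≤ z * Real.log c := by
    have : (b : ℝ) ^ y ≤ (c : ℝ) ^ z := by
      have : 0 < (a : ℝ) ^ x := by positivity
      linarith
    have := Real.log_le_log (by positivity) this
    rwa [Real.log_pow, Real.log_pow] at this
  obtain ⟨hX3, hL3⟩ := hclose (by
    apply max_le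
    · rw [div_le_iff₀ hq0]
      apply le_of_mul_le_mul_right _ hp0
      linarith
    · rw [div_le_iff₀ hp0]
      apply le_of_mul_le_mul_right _ hq0
      linarith)
  have hx3 := (div_lt_iff₀ hq0).1 ((le_max_left _ _).trans_lt hX3)
  have hy3 := (div_lt_iff₀ hp0).1 ((le_max_right _ _).trans_lt hX3)
  refine ⟨?_, ?_, ?_⟩
  · calc (x : ℝ) < 6500 * A ^ 2 * Real.log b := hx3
      _ ≤ 6500 * A ^ 2 * A := by gcongr
      _ = _ := by ring
  · calc (y : ℝ) < 6500 * A ^ 2 * Real.log a := hy3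
      _ ≤ 6500 * A ^ 2 * A := by gcongr
      _ = _ := by ring
  · have e1 : Real.log a * Real.log b ≤ A * A := mul_le_mul haA hbA hq0.le hA0.le
    calc (z : ℝ) ≤ 18.25 * L ^ 2 * (Real.log a * Real.log b) := hz1
      _ ≤ 18.5 * L ^ 2 * (A * A) := by gcongr; norm_num
      _ < 6500 * A * (A * A) := by gcongr
      _ = _ := by ring

theorem log_five_ge {m : ℕ} (hm : 5 ≤ m) : 1.5 ≤ Real.log m := by
  have h5 : (5 : ℝ) ≤ m := by exact_mod_cast hm
  rw [Real.le_log_iff_exp_le (by linarith)]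
  refine le_trans ?_ h5
  refine (pow_le_pow_iff_left₀ (Real.exp_pos _).le (by norm_num) two_ne_zero).1 ?_
  have : Real.exp 1.5 ^ 2 = Real.exp 1 ^ 3 := by
    rw [← Real.exp_nat_mul, ← Real.exp_nat_mul]; norm_num
  rw [this]
  calc Real.exp 1 ^ 3 ≤ 2.7182818286 ^ 3 := by gcongr; exact Real.exp_one_lt_d9.le
    _ ≤ _ := by norm_num

theorem five_le_max {a b c : ℕ} (hab : Nat.Coprime a b) (hac : Nat.Coprime a c)
    (hbc : Nat.Coprime b c) (ha : 1 < a) (hb : 1 < b) (hc : 1 < c) : 5 ≤ max a (max b c) := by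
  by_contra! h
  have h1 : a ≤ 4 := by omega
  have h2 : b ≤ 4 := by omega
  have h3 : c ≤ 4 := by omega
  interval_cases a <;> interval_cases b <;> interval_cases c <;>
    first
    | (revert hab; decide)
    | (revert hac; decide)
    | (revert hbc; decide)

theorem stmt_3 (a b c : ℕ) (ha : 0 < a) (hb : 0 < b) (hc : 0 < c)
    (hab : Nat.Coprime a b) (hac : Nat.Coprime a c) (hbc : Nat.Coprime b c)
    (hmin : 1 < min a (min b c))
    (x y z : ℕ) (hx : 0 < x) (hy : 0 < y) (hz : 0 < z)
    (heq : a ^ x + b ^ y = c ^ z) :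
    (max x (max y z) : ℝ) < 6500 * (Real.log (max a (max b c))) ^ 3 := by
  have ha1 : 1 < a := by omega
  have hb1 : 1 < b := by omega
  have hc1 : 1 < c := by omega
  have ha0 : (0 : ℝ) < a := by exact_mod_cast ha
  have hb0 : (0 : ℝ) < b := by exact_mod_cast hb
  have hc0 : (0 : ℝ) < c := by exact_mod_cast hc
  have hA : 1.5 ≤ Real.log (max a (max b c)) := by
    exact_mod_cast log_five_ge (five_le_max hab hac hbc ha1 hb1 hc1)
  have haA : Real.log a ≤ Real.log (max a (max b c)) := Real.log_le_log ha0 (le_max_left _ _)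
  have hbA : Real.log b ≤ Real.log (max a (max b c)) :=
    Real.log_le_log hb0 ((le_max_left _ _).trans (le_max_right _ _))
  have hcA : Real.log c ≤ Real.log (max a (max b c)) :=
    Real.log_le_log hc0 ((le_max_right _ _).trans (le_max_right _ _))
  generalize Real.log (max (a : ℝ) (max b c)) = A at *
  -- a base coprime to an even base is odd, hence at least `3`
  have hodd : ∀ {m n : ℕ}, Nat.Coprime m n → Even m → 1 < n → Odd n ∧ 3 ≤ n := by
    intro m n hmn hm hn
    have h1 : Odd n := by
      by_contra hcon
      rw [Nat.not_odd_iff_even] at hcon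
      have := Nat.dvd_gcd hm.two_dvd hcon.two_dvd
      rw [hmn.gcd_eq_one] at this
      omega
    refine ⟨h1, ?_⟩
    obtain ⟨k, rfl⟩ := h1
    omega
  have main : x < 6500 * A ^ 3 ∧ y < 6500 * A ^ 3 ∧ z < 6500 * A ^ 3 := by
    rcases Nat.even_or_odd a with hae | hao
    · obtain ⟨hbo, hb3⟩ := hodd hab hae hb1
      obtain ⟨hco, hc3⟩ := hodd hac hae hc1
      exact even_left ha hae hb3 hc3 hbo hco hbc hy hz hA haA hbA hcA heq
    rcases Nat.even_or_odd b with hbe | hbo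
    · obtain ⟨hao, ha3⟩ := hodd hab.symm hbe ha1
      obtain ⟨hco, hc3⟩ := hodd hbc hbe hc1
      obtain ⟨h1, h2, h3⟩ := even_left hb hbe ha3 hc3 hao hco hac hx hz hA hbA haA hcA
        (by rw [add_comm]; exact heq)
      exact ⟨h2, h1, h3⟩
    have hce : Even c := by
      have h1 : Even (c ^ z) := heq ▸ (hao.pow.add_odd hbo.pow)
      exact (Nat.even_pow.1 h1).1
    obtain ⟨_, ha3⟩ := hodd hac.symm hce ha1
    obtain ⟨_, hb3⟩ := hodd hbc.symm hce hb1
    exact even_right hc hce ha3 hb3 hao hbo hab hx hy hA haA hbA hcA heq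
  exact max_lt main.1 (max_lt main.2.1 main.2.2)
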